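/- arXiv:1711.00998 — 3 statements merged into one kernel-verified Lean document; each statement's English description precedes it below -/
import Mathlib

section
/- Fix θ ∈ S^{n-1} and γ > 0. Let f : ℝ^n → [0,∞) be a γ-concave function, continuous on its support K_f, with 0 < ∫_{ℝ^n} f(x) dx < ∞ and centroid at the origin (so in particular f(0) > 0 and ∫_0^∞ f(sθ) ds > 0). Set β := γ f(0)^{γ+1} / ( (γ+1) ∫_0^∞ f(sθ) ds ), let f_o(s) := f(sθ), and define H̃(o) := max over a ∈ supp(f_o) of ( [ (β(γ+1)/γ) ∫_a^∞ f_o(s) ds ]^{γ/(γ+1)} + β a ). Then H̃(o) = f(0)^γ. -/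
open MeasureTheory Set
open scoped RealInnerProductSpace

/-!
Write `h` for the restriction of `f` to the line `ℝ θ`; it is positive near `0` because the
centroid of `f` lies in the interior of the support. The number `β` is chosen so that the profile
`L(s) = (f(0)^γ - β s)₊ ^ (1 / γ)` has `L(0) = h(0)` and the same integral as `h` over `[0, ∞)`.
As `h ^ γ` is concave while `L ^ γ` is affine, equality of the integrals forces `h ≤ L` on
`(-∞, 0]`, while on `(0, ∞)` the difference `h - L` changes sign at most once, from plus to minus.
Hence `∫_a^∞ h ≤ ∫_a^∞ L` for all `a` in the support, with equality at `a = 0`. For `L` in place of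
`h` the maximized expression is constantly `f(0)^γ` as long as `β a ≤ f(0)^γ`, and this holds on the
support of `h`, again by comparing integrals.
-/

lemma exists_affine_ge_of_concaveOn {S : Set ℝ} {g : ℝ → ℝ} (hg : ConcaveOn ℝ S g) {x : ℝ}
    (hx : x ∈ interior S) : ∃ k, ∀ y ∈ S, g y ≤ g x + k * (y - x) := by
  have hconv := hg.neg
  set d := derivWithin (-g) (Ioi x) x
  refine ⟨-d, fun y hy => ?_⟩
  rcases lt_trichotomy y x with hyx | rfl | hxy
  · have hslope := (hconv.slope_le_leftDeriv_of_mem_interior hy hx hyx).trans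
      (hconv.leftDeriv_le_rightDeriv_of_mem_interior hx)
    rw [slope_def_field, div_le_iff₀ (sub_pos.2 hyx)] at hslope
    simp only [Pi.neg_apply] at hslope
    linarith
  · simp
  · have hslope := hconv.rightDeriv_le_slope_of_mem_interior hx hy hxy
    rw [slope_def_field, le_div_iff₀ (sub_pos.2 hxy)] at hslope
    simp only [Pi.neg_apply] at hslope
    linarith

section NormedSpace

variable {E : Type*} [NormedAddCommGroup E] [NormedSpace ℝ E]

lemma ball_midpoint_subset_of_convex {s : Set E} (hs : Convex ℝ s) {x y : E} {r : ℝ}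
    (hball : Metric.ball x r ⊆ s) (hy : y ∈ s) : Metric.ball (midpoint ℝ x y) (r / 2) ⊆ s := by
  intro z hz
  have hw : x + (2 : ℝ) • (z - midpoint ℝ x y) ∈ s := by
    refine hball ?_
    rw [Metric.mem_ball, dist_eq_norm] at hz ⊢
    rw [add_sub_cancel_left, norm_smul, Real.norm_two]
    linarith
  have hz' : midpoint ℝ (x + (2 : ℝ) • (z - midpoint ℝ x y)) y = z := by
    simp only [midpoint_eq_smul_add, invOf_eq_inv]
    module
  exact hz' ▸ hs.midpoint_mem hw hy

lemma zero_mem_interior_preimage_smul {S : Set E} (hS : 0 ∈ interior S) (θ : E) :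
    0 ∈ interior ((fun s : ℝ => s • θ) ⁻¹' S) :=
  preimage_interior_subset_interior_preimage (continuous_id.smul continuous_const)
    (by simpa using hS)

lemma bddAbove_preimage_smul {S : Set E} (hS : Bornology.IsBounded S) {θ : E} (hθ : θ ≠ 0) :
    BddAbove ((fun s : ℝ => s • θ) ⁻¹' S) := by
  obtain ⟨R, hR⟩ := hS.exists_norm_le
  refine ⟨R / ‖θ‖, fun s hs => (le_div_iff₀ (norm_pos_iff.2 hθ)).2 ?_⟩
  calc s * ‖θ‖ ≤ ‖s‖ * ‖θ‖ := mul_le_mul_of_nonneg_right (le_abs_self s) (norm_nonneg θ)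
    _ = ‖s • θ‖ := (norm_smul s θ).symm
    _ ≤ R := hR _ hs

end NormedSpace

section Measure

variable {E : Type*} [NormedAddCommGroup E] [NormedSpace ℝ E] [MeasurableSpace E]
  {μ : Measure E} {f : E → ℝ}

lemma centroid_mem_interior_support [CompleteSpace E] [μ.IsOpenPosMeasure]
    (hf : ∀ x, 0 ≤ f x) (hs : Convex ℝ (Function.support f))
    (hs' : (interior (Function.support f)).Nonempty) (hf_int : Integrable f μ)
    (hfx_int : Integrable (fun x => f x • x) μ) :
    (∫ x, f x ∂μ)⁻¹ • ∫ x, f x • x ∂μ ∈ interior (Function.support f) := by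
  set g := (∫ x, f x ∂μ)⁻¹ • ∫ x, f x • x ∂μ with hg
  have hf_pos : 0 < ∫ x, f x ∂μ := by
    rw [integral_pos_iff_support_of_nonneg hf hf_int]
    exact Measure.measure_pos_of_nonempty_interior μ hs'
  by_contra hmem
  obtain ⟨φ, hφ⟩ := geometric_hahn_banach_open_point hs.interior isOpen_interior hmem
  have hφ_le : ∀ x ∈ Function.support f, φ x ≤ φ g := by
    intro x hx
    have hx' : x ∈ closure (interior (Function.support f)) := by
      rw [hs.closure_interior_eq_closure_of_nonempty_interior hs']
      exact subset_closure hx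
    exact closure_minimal (fun y hy => (hφ y hy).le)
      (isClosed_le φ.continuous continuous_const) hx'
  have hint : Integrable (fun x => f x * φ g - φ (f x • x)) μ :=
    (hf_int.mul_const _).sub (φ.integrable_comp hfx_int)
  have hnonneg : 0 ≤ fun x => f x * φ g - φ (f x • x) := fun x => by
    by_cases hx : f x = 0
    · simp [hx]
    · simpa using mul_le_mul_of_nonneg_left (hφ_le x hx) (hf x)
  have hzero : ∫ x, f x * φ g - φ (f x • x) ∂μ = 0 := by
    rw [integral_sub (hf_int.mul_const _) (φ.integrable_comp hfx_int), integral_mul_const,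
      φ.integral_comp_comm hfx_int, hg, map_smul, smul_eq_mul, mul_inv_cancel_left₀ hf_pos.ne',
      sub_self]
  have hpos : 0 < ∫ x, f x * φ g - φ (f x • x) ∂μ := by
    rw [integral_pos_iff_support_of_nonneg hnonneg hint]
    refine (isOpen_interior.measure_pos μ hs').trans_le (measure_mono fun x hx => ?_)
    have hfx : 0 < f x := (hf x).lt_of_ne' (interior_subset hx)
    have := mul_lt_mul_of_pos_left (hφ x hx) hfx
    simpa using (sub_pos.2 this).ne'
  exact hpos.ne' hzero

lemma integrable_smul_of_isBounded_support [SecondCountableTopology E] [OpensMeasurableSpace E]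
    (hf : Integrable f μ) (hs : Bornology.IsBounded (Function.support f)) :
    Integrable (fun x => f x • x) μ := by
  obtain ⟨R, hR⟩ := hs.exists_norm_le
  refine (hf.norm.mul_const R).mono' (hf.1.smul aestronglyMeasurable_id) (.of_forall fun x => ?_)
  rw [norm_smul]
  by_cases hx : f x = 0
  · simp [hx]
  · exact mul_le_mul_of_nonneg_left (hR x hx) (norm_nonneg _)

lemma isBounded_of_convex_of_measure_ne_top [BorelSpace E] [μ.IsAddHaarMeasure] {s : Set E}
    (hs : Convex ℝ s) (hs' : (interior s).Nonempty) (hμ : μ s ≠ ⊤) : Bornology.IsBounded s := by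
  obtain ⟨x₀, hx₀⟩ := hs'
  obtain ⟨r, hr, hball⟩ := Metric.mem_nhds_iff.1 (mem_interior_iff_mem_nhds.1 hx₀)
  by_contra hbdd
  -- An unbounded `s` contains infinitely many disjoint balls of radius `r / 2`: the midpoints of
  -- `x₀` and far apart points of `s` are centers.
  have hfar : ∀ t : Finset E, (∀ x ∈ t, x ∈ s) → ∃ y, y ∈ s ∧ ∀ x ∈ t, 2 * r ≤ dist x y := by
    intro t _
    by_contra! hnear
    refine hbdd (((Bornology.isBounded_biUnion_finset t).2 fun x _ =>
      Metric.isBounded_ball (x := x) (r := 2 * r)).subset fun y hy => ?_)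
    obtain ⟨x, hxt, hxy⟩ := hnear y hy
    exact mem_biUnion hxt (Metric.mem_ball'.2 hxy)
  obtain ⟨y, hys, hy⟩ := exists_seq_of_forall_finset_exists _ _ hfar
  have hdisj : Pairwise (Function.onFun Disjoint
      fun k => Metric.ball (midpoint ℝ x₀ (y k)) (r / 2)) := by
    rw [pairwise_disjoint_on]
    intro j k hjk
    have hdist := hy j k hjk
    apply Metric.ball_disjoint_ball
    rw [midpoint_eq_smul_add, midpoint_eq_smul_add, dist_smul₀, dist_add_left, invOf_eq_inv,
      norm_inv, Real.norm_two]
    linarith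
  have hfin := Measure.finite_const_le_meas_of_disjoint_iUnion μ
    (Metric.measure_ball_pos μ 0 (half_pos hr)) (fun _ => Metric.isOpen_ball.measurableSet) hdisj
    (measure_ne_top_of_subset
      (iUnion_subset fun k => ball_midpoint_subset_of_convex hs hball (hys k)) hμ)
  simp only [Measure.addHaar_ball_center, le_refl, ofPred_true] at hfin
  exact infinite_univ hfin

lemma nonempty_interior_of_convex_of_measure_ne_zero [BorelSpace E] [FiniteDimensional ℝ E]
    [μ.IsAddHaarMeasure] {s : Set E} (hs : Convex ℝ s) (hμ : μ s ≠ 0) :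
    (interior s).Nonempty := by
  rw [hs.interior_nonempty_iff_affineSpan_eq_top]
  contrapose! hμ
  exact measure_mono_null (subset_affineSpan ℝ s) (Measure.addHaar_affineSubspace μ _ hμ)

end Measure

/-- The nonnegative `γ`-concave functions, `γ > 0`: those `f` for which `f ^ γ` is concave on the
support `{f ≠ 0}`. The convexity of the support is part of `ConcaveOn`. -/
structure PowerConcave {E : Type*} [AddCommGroup E] [Module ℝ E] (γ : ℝ) (f : E → ℝ) : Prop where
  exponent_pos : 0 < γ
  nonneg : ∀ x, 0 ≤ f x
  concaveOn : ConcaveOn ℝ (Function.support f) fun x => f x ^ γ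

namespace PowerConcave

section Module

variable {E F : Type*} [AddCommGroup E] [Module ℝ E] [AddCommGroup F] [Module ℝ F] {γ : ℝ}
  {f : E → ℝ}

lemma of_rpow_mean_le (hγ : 0 < γ) (hf : ∀ x, 0 ≤ f x)
    (h : ∀ x y, f x ≠ 0 → f y ≠ 0 → ∀ l : ℝ, 0 ≤ l → l ≤ 1 →
      (l * f x ^ γ + (1 - l) * f y ^ γ) ^ (1 / γ) ≤ f (l • x + (1 - l) • y)) :
    PowerConcave γ f := by
  have hcomb : ∀ ⦃x⦄, f x ≠ 0 → ∀ ⦃y⦄, f y ≠ 0 → ∀ ⦃a b : ℝ⦄, 0 ≤ a → 0 ≤ b → a + b = 1 →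
      0 < f (a • x + b • y) ∧ a * f x ^ γ + b * f y ^ γ ≤ f (a • x + b • y) ^ γ := by
    intro x hx y hy a b ha hb hab
    obtain rfl : b = 1 - a := by linarith
    have hmean : 0 < a * f x ^ γ + (1 - a) * f y ^ γ :=
      convex_Ioi (0 : ℝ) (Real.rpow_pos_of_pos ((hf x).lt_of_ne' hx) γ)
        (Real.rpow_pos_of_pos ((hf y).lt_of_ne' hy) γ) ha hb hab
    have hle := h x y hx hy a ha (by linarith)
    refine ⟨(Real.rpow_pos_of_pos hmean _).trans_le hle, ?_⟩
    rwa [one_div, Real.rpow_inv_le_iff_of_pos hmean.le (hf _) hγ] at hle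
  exact ⟨hγ, hf, fun x hx y hy a b ha hb hab => (hcomb hx hy ha hb hab).1.ne',
    fun x hx y hy a b ha hb hab => (hcomb hx hy ha hb hab).2⟩

lemma comp_linearMap (hf : PowerConcave γ f) (g : F →ₗ[ℝ] E) : PowerConcave γ (f ∘ g) :=
  ⟨hf.exponent_pos, fun x => hf.nonneg (g x), hf.concaveOn.comp_linearMap g⟩

end Module

section Measure

variable {E : Type*} [NormedAddCommGroup E] [NormedSpace ℝ E] [MeasurableSpace E] [BorelSpace E]
  [FiniteDimensional ℝ E] {μ : Measure E} [μ.IsAddHaarMeasure] {γ : ℝ} {f : E → ℝ}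

lemma aestronglyMeasurable (hf : PowerConcave γ f) : AEStronglyMeasurable f μ := by
  set S := Function.support f
  have hcont : ContinuousOn f (interior S) := by
    have hγ : 0 ≤ γ⁻¹ := inv_nonneg.2 hf.exponent_pos.le
    exact (hf.concaveOn.continuousOn_interior.rpow_const fun _ _ => .inr hγ).congr fun x _ =>
      (Real.rpow_rpow_inv (hf.nonneg x) hf.exponent_pos.ne').symm
  have hmeas := hcont.aestronglyMeasurable (μ := μ) isOpen_interior.measurableSet
  refine ((aestronglyMeasurable_indicator_iff isOpen_interior.measurableSet).2 hmeas).congr ?_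
  have hfr : ∀ᵐ x ∂μ, x ∉ frontier S := by
    simpa using measure_eq_zero_iff_ae_notMem.1 (hf.concaveOn.1.addHaar_frontier μ)
  filter_upwards [hfr] with x hx
  by_cases hxS : x ∈ interior S
  · exact indicator_of_mem hxS f
  · rw [indicator_of_notMem hxS]
    by_contra hne
    exact hx ⟨subset_closure (Ne.symm hne), hxS⟩

lemma measure_support_ne_top (hf : PowerConcave γ f) (hf_int : Integrable f μ) :
    μ (Function.support f) ≠ ⊤ := by
  rcases (Function.support f).eq_empty_or_nonempty with hempty | ⟨x₀, hx₀⟩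
  · simp [hempty]
  have hf₀ : 0 < f x₀ ^ γ / 2 := half_pos (Real.rpow_pos_of_pos ((hf.nonneg x₀).lt_of_ne' hx₀) γ)
  -- Contracting the support halfway towards `x₀` keeps `f` bounded away from `0` on it.
  have hsub : AffineMap.homothety x₀ (1 / 2 : ℝ) '' Function.support f ⊆
      {x | (f x₀ ^ γ / 2) ^ γ⁻¹ ≤ f x} := by
    rintro _ ⟨y, hy, rfl⟩
    have hconc := hf.concaveOn.2 hx₀ hy one_half_pos.le one_half_pos.le (add_halves 1)
    have hy0 : 0 ≤ f y ^ γ := Real.rpow_nonneg (hf.nonneg y) γ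
    have hxy : AffineMap.homothety x₀ (1 / 2 : ℝ) y = (1 / 2 : ℝ) • x₀ + (1 / 2 : ℝ) • y := by
      simp only [AffineMap.homothety_apply, vsub_eq_sub, vadd_eq_add]
      module
    rw [mem_ofPred_eq, Real.rpow_inv_le_iff_of_pos hf₀.le (hf.nonneg _) hf.exponent_pos, hxy]
    simp only [smul_eq_mul] at hconc
    linarith
  have hfin := (measure_mono hsub).trans_lt (hf_int.measure_ge_lt_top (Real.rpow_pos_of_pos hf₀ _))
  rw [Measure.addHaar_image_homothety] at hfin
  exact (ENNReal.lt_top_of_mul_ne_top_right hfin.ne (by simp)).ne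

lemma nonempty_interior_support (hf : PowerConcave γ f) (hf_int : Integrable f μ)
    (hf_pos : 0 < ∫ x, f x ∂μ) : (interior (Function.support f)).Nonempty :=
  nonempty_interior_of_convex_of_measure_ne_zero (μ := μ) hf.concaveOn.1
    ((integral_pos_iff_support_of_nonneg hf.nonneg hf_int).1 hf_pos).ne'

lemma isBounded_support (hf : PowerConcave γ f) (hf_int : Integrable f μ)
    (hf_pos : 0 < ∫ x, f x ∂μ) : Bornology.IsBounded (Function.support f) :=
  isBounded_of_convex_of_measure_ne_top hf.concaveOn.1
    (hf.nonempty_interior_support hf_int hf_pos) (hf.measure_support_ne_top hf_int)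

lemma zero_mem_interior_support (hf : PowerConcave γ f) (hf_int : Integrable f μ)
    (hf_pos : 0 < ∫ x, f x ∂μ) (hf_cent : ∫ x, f x • x ∂μ = 0) :
    0 ∈ interior (Function.support f) := by
  have hcent := centroid_mem_interior_support hf.nonneg hf.concaveOn.1
    (hf.nonempty_interior_support hf_int hf_pos) hf_int
    (integrable_smul_of_isBounded_support hf_int (hf.isBounded_support hf_int hf_pos))
  rwa [hf_cent, smul_zero] at hcent

end Measure

end PowerConcave

/-- The profile `(m - β s)₊ ^ (1 / γ)`, whose `γ`-th power is affine on its support: it is the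
comparison function for `γ`-concave functions on the line. -/
noncomputable def affineProfile (γ m β s : ℝ) : ℝ := max (m - β * s) 0 ^ γ⁻¹

section AffineProfile

variable {γ m β : ℝ}

lemma affineProfile_nonneg (s : ℝ) : 0 ≤ affineProfile γ m β s :=
  Real.rpow_nonneg (le_max_right _ _) _

lemma affineProfile_eq_zero (hγ : γ ≠ 0) {s : ℝ} (hs : m ≤ β * s) : affineProfile γ m β s = 0 := by
  rw [affineProfile, max_eq_right (by linarith), Real.zero_rpow (inv_ne_zero hγ)]

lemma affineProfile_le_iff (hγ : 0 < γ) {s x : ℝ} (hx : 0 ≤ x) :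
    affineProfile γ m β s ≤ x ↔ m - β * s ≤ x ^ γ := by
  rw [affineProfile, Real.rpow_inv_le_iff_of_pos (le_max_right _ _) hx hγ, max_le_iff,
    and_iff_left (Real.rpow_nonneg hx γ)]

lemma le_affineProfile_iff (hγ : 0 < γ) {s x : ℝ} (hx : 0 < x) :
    x ≤ affineProfile γ m β s ↔ x ^ γ ≤ m - β * s := by
  rw [affineProfile, Real.le_rpow_inv_iff_of_pos hx.le (le_max_right _ _) hγ, le_max_iff,
    or_iff_left (Real.rpow_pos_of_pos hx γ).not_ge]

lemma continuous_affineProfile (hγ : 0 ≤ γ) : Continuous (affineProfile γ m β) :=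
  Continuous.rpow_const (by fun_prop) fun _ => .inr (inv_nonneg.2 hγ)

lemma integrableOn_Ioi_affineProfile (hγ : 0 < γ) (hβ : 0 < β) (a : ℝ) :
    IntegrableOn (affineProfile γ m β) (Ioi a) := by
  have hcont : IntegrableOn (affineProfile γ m β) (Icc a (m / β)) :=
    (continuous_affineProfile hγ.le).continuousOn.integrableOn_compact isCompact_Icc
  refine hcont.of_forall_sdiff_eq_zero measurableSet_Ioi fun s hs => ?_
  refine affineProfile_eq_zero hγ.ne' ((div_le_iff₀' hβ).1 (le_of_not_ge fun h => ?_))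
  exact hs.2 ⟨le_of_lt hs.1, h⟩

lemma integral_Ioi_affineProfile (hγ : 0 < γ) (hβ : 0 < β) (a : ℝ) :
    ∫ s in Ioi a, affineProfile γ m β s =
      γ / (β * (γ + 1)) * max (m - β * a) 0 ^ ((γ + 1) / γ) := by
  have hvanish : ∀ b, m ≤ β * b → ∫ s in Ioi b, affineProfile γ m β s = 0 := fun b hb =>
    setIntegral_eq_zero_of_forall_eq_zero fun s hs =>
      affineProfile_eq_zero hγ.ne' (hb.trans (mul_le_mul_of_nonneg_left (le_of_lt hs) hβ.le))
  have hq : (γ + 1) / γ ≠ 0 := by positivity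
  rcases le_total m (β * a) with hma | ham
  · rw [hvanish a hma, max_eq_right (by linarith), Real.zero_rpow hq, mul_zero]
  · have hac : a ≤ m / β := (le_div_iff₀' hβ).2 ham
    have hc : β * (m / β) = m := mul_div_cancel₀ m hβ.ne'
    have hon : EqOn (affineProfile γ m β) (fun s => (m - β * s) ^ γ⁻¹) (uIcc a (m / β)) := by
      intro s hs
      rw [uIcc_of_le hac] at hs
      have hβs : β * s ≤ m := (le_div_iff₀' hβ).1 hs.2
      rw [affineProfile, max_eq_left (by linarith)]
    have hγ' : -1 < γ⁻¹ := by linarith [inv_pos.2 hγ]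
    have hexp : γ⁻¹ + 1 = (γ + 1) / γ := by field_simp; ring
    have hsplit := intervalIntegral.integral_Ioi_sub_Ioi
      (integrableOn_Ioi_affineProfile (m := m) hγ hβ a) hac
    rw [hvanish _ hc.ge, sub_zero] at hsplit
    rw [hsplit, intervalIntegral.integral_congr hon,
      intervalIntegral.integral_comp_sub_mul (fun x => x ^ γ⁻¹) hβ.ne', integral_rpow (.inl hγ'),
      hc, sub_self, hexp, Real.zero_rpow hq, sub_zero, max_eq_left (by linarith), smul_eq_mul]
    field_simp

lemma le_of_integral_affineProfile_le {β' : ℝ} (hγ : 0 < γ) (hm : 0 < m) (hβ : 0 < β)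
    (hβ' : 0 < β')
    (h : ∫ s in Ioi 0, affineProfile γ m β s ≤ ∫ s in Ioi 0, affineProfile γ m β' s) :
    β' ≤ β := by
  rw [integral_Ioi_affineProfile hγ hβ, integral_Ioi_affineProfile hγ hβ', mul_zero, mul_zero,
    sub_zero, max_eq_left hm.le, mul_le_mul_iff_left₀ (Real.rpow_pos_of_pos hm _),
    div_le_div_iff_of_pos_left hγ (by positivity) (by positivity),
    mul_le_mul_iff_left₀ (by positivity)] at h
  exact h

end AffineProfile

/-- The quantity maximized over `a` in the definition of `H̃(o)`, for a function `h` on the line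
(the restriction of `f` to the line `ℝ θ`). -/
noncomputable def tailFunctional (γ β : ℝ) (h : ℝ → ℝ) (a : ℝ) : ℝ :=
  (β * (γ + 1) / γ * ∫ s in Ioi a, h s) ^ (γ / (γ + 1)) + β * a

section TailFunctional

variable {γ m β : ℝ} {h : ℝ → ℝ}

lemma tailFunctional_affineProfile (hγ : 0 < γ) (hβ : 0 < β) (a : ℝ) :
    tailFunctional γ β (affineProfile γ m β) a = max (m - β * a) 0 + β * a := by
  have hscale : β * (γ + 1) / γ * (γ / (β * (γ + 1))) = 1 := by field_simp
  have hexp : (γ + 1) / γ * (γ / (γ + 1)) = 1 := by field_simp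
  rw [tailFunctional, integral_Ioi_affineProfile hγ hβ, ← mul_assoc, hscale, one_mul,
    ← Real.rpow_mul (le_max_right _ _), hexp, Real.rpow_one]

lemma tailFunctional_le_tailFunctional (hγ : 0 ≤ γ) (hβ : 0 ≤ β) {k : ℝ → ℝ} {a : ℝ}
    (hh : 0 ≤ ∫ s in Ioi a, h s) (hle : ∫ s in Ioi a, h s ≤ ∫ s in Ioi a, k s) :
    tailFunctional γ β h a ≤ tailFunctional γ β k a := by
  unfold tailFunctional
  gcongr

lemma continuous_tailFunctional (hγ : 0 ≤ γ) (hh : ∀ a, IntegrableOn h (Ioi a)) :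
    Continuous (tailFunctional γ β h) := by
  have hii : ∀ u v, IntervalIntegrable h volume u v := fun u v =>
    intervalIntegrable_iff.2 ((hh (min u v)).mono_set Ioc_subset_Ioi_self)
  have hprimitive : (fun a => ∫ s in Ioi a, h s) =
      fun a => (∫ s in Ioi 0, h s) - ∫ s in (0 : ℝ)..a, h s := by
    funext a
    rw [← intervalIntegral.integral_Ioi_sub_Ioi' (hh 0) (hh a), sub_sub_cancel]
  have htail : Continuous fun a => ∫ s in Ioi a, h s := by
    rw [hprimitive]
    exact continuous_const.sub (intervalIntegral.continuous_primitive hii 0)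
  exact ((continuous_const.mul htail).rpow_const fun _ => .inr (by positivity)).add (by fun_prop)

end TailFunctional

namespace PowerConcave

variable {γ β : ℝ} {h : ℝ → ℝ}

lemma concaveOn_rpow_add_mul (hh : PowerConcave γ h) (β : ℝ) :
    ConcaveOn ℝ (Function.support h) fun s => h s ^ γ + β * s :=
  hh.concaveOn.add ((β • LinearMap.id).concaveOn hh.concaveOn.1)

lemma affineProfile_le (hh : PowerConcave γ h) (h0 : h 0 ≠ 0) {s t : ℝ} (hs : h s ≠ 0)
    (hle : h 0 ^ γ - β * s ≤ h s ^ γ) (ht : t ∈ Icc 0 s) :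
    affineProfile γ (h 0 ^ γ) β t ≤ h t := by
  have hmin := (hh.concaveOn_rpow_add_mul β).ge_on_segment h0 hs (Icc_subset_segment ht)
  rw [mul_zero, add_zero, min_eq_left (by linarith)] at hmin
  rw [affineProfile_le_iff hh.exponent_pos (hh.nonneg t)]
  linarith

lemma le_affineProfile_of_neg_of_pos (hh : PowerConcave γ h) {s t : ℝ} (hs : h s ≠ 0)
    (hle : h 0 ^ γ - β * s ≤ h s ^ γ) (hs0 : s < 0) (ht : 0 < t) :
    h t ≤ affineProfile γ (h 0 ^ γ) β t := by
  by_cases ht' : h t = 0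
  · exact ht'.trans_le (affineProfile_nonneg t)
  have hleft : h 0 ^ γ + β * 0 ≤ h s ^ γ + β * s := by linarith
  have hright := (hh.concaveOn_rpow_add_mul β).right_le_of_le_left'' hs ht' hs0 ht.le hleft
  rw [le_affineProfile_iff hh.exponent_pos ((hh.nonneg t).lt_of_ne' ht')]
  linarith

lemma exists_le_affineProfile (hh : PowerConcave γ h) (h0 : 0 ∈ interior (Function.support h)) :
    ∃ k, ∀ s, h s ≤ affineProfile γ (h 0 ^ γ) k s := by
  obtain ⟨k, hk⟩ := exists_affine_ge_of_concaveOn hh.concaveOn h0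
  refine ⟨-k, fun s => ?_⟩
  by_cases hs : h s = 0
  · exact hs.trans_le (affineProfile_nonneg s)
  · rw [le_affineProfile_iff hh.exponent_pos ((hh.nonneg s).lt_of_ne' hs)]
    linarith [hk s hs]

lemma locallyIntegrable (hh : PowerConcave γ h) (h0 : 0 ∈ interior (Function.support h)) :
    LocallyIntegrable h := by
  obtain ⟨k, hk⟩ := hh.exists_le_affineProfile h0
  have hL : LocallyIntegrable (affineProfile γ (h 0 ^ γ) k) :=
    (continuous_affineProfile hh.exponent_pos.le).locallyIntegrable
  refine hL.mono hh.aestronglyMeasurable (.of_forall fun s => ?_)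
  rw [Real.norm_of_nonneg (hh.nonneg s), Real.norm_of_nonneg (affineProfile_nonneg s)]
  exact hk s

lemma integrableOn_Ioi (hh : PowerConcave γ h) (h0 : 0 ∈ interior (Function.support h))
    (hbdd : BddAbove (Function.support h)) (a : ℝ) : IntegrableOn h (Ioi a) := by
  obtain ⟨b, hb⟩ := hbdd
  have hIcc : IntegrableOn h (Icc a b) :=
    (hh.locallyIntegrable h0).integrableOn_isCompact isCompact_Icc
  refine hIcc.of_forall_sdiff_eq_zero measurableSet_Ioi fun s hs => ?_
  by_contra hne
  exact hs.2 ⟨le_of_lt hs.1, hb hne⟩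

lemma integral_Ioi_pos (hh : PowerConcave γ h) (h0 : 0 ∈ interior (Function.support h))
    (hbdd : BddAbove (Function.support h)) : 0 < ∫ s in Ioi 0, h s := by
  rw [setIntegral_pos_iff_support_of_nonneg_ae (.of_forall hh.nonneg)
    (hh.integrableOn_Ioi h0 hbdd 0)]
  obtain ⟨ε, hε, hball⟩ := Metric.mem_nhds_iff.1 (mem_interior_iff_mem_nhds.1 h0)
  have hsub : Ioo 0 ε ⊆ Function.support h ∩ Ioi 0 := fun s hs =>
    ⟨hball (by simpa [abs_of_pos hs.1] using hs.2), hs.1⟩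
  exact (isOpen_Ioo.measure_pos volume (nonempty_Ioo.2 hε)).trans_le (measure_mono hsub)

lemma mul_le_rpow_of_balanced (hh : PowerConcave γ h) (h0 : h 0 ≠ 0) (hβ : 0 < β)
    (hint : IntegrableOn h (Ioi 0))
    (hbal : ∫ s in Ioi 0, affineProfile γ (h 0 ^ γ) β s = ∫ s in Ioi 0, h s)
    {s : ℝ} (hs : h s ≠ 0) : β * s ≤ h 0 ^ γ := by
  have hm : 0 < h 0 ^ γ := Real.rpow_pos_of_pos ((hh.nonneg 0).lt_of_ne' h0) γ
  rcases le_or_gt s 0 with hs0 | hs0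
  · exact (mul_nonpos_of_nonneg_of_nonpos hβ.le hs0).trans hm.le
  have hβ' : 0 < h 0 ^ γ / s := div_pos hm hs0
  have hs' : h 0 ^ γ / s * s = h 0 ^ γ := div_mul_cancel₀ _ hs0.ne'
  -- The profile vanishing exactly from `s` on lies below `h`, so it cannot have a larger integral.
  have hbelow : ∀ t ∈ Ioi (0 : ℝ), affineProfile γ (h 0 ^ γ) (h 0 ^ γ / s) t ≤ h t := by
    intro t ht
    rcases le_or_gt t s with hts | hst
    · refine hh.affineProfile_le h0 hs ?_ ⟨le_of_lt ht, hts⟩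
      rw [hs', sub_self]
      exact Real.rpow_nonneg (hh.nonneg s) γ
    · rw [affineProfile_eq_zero hh.exponent_pos.ne']
      · exact hh.nonneg t
      · exact hs'.symm.trans_le (mul_le_mul_of_nonneg_left hst.le hβ'.le)
  have hle := setIntegral_mono_on (integrableOn_Ioi_affineProfile hh.exponent_pos hβ' 0) hint
    measurableSet_Ioi hbelow
  rw [← le_div_iff₀ hs0]
  exact le_of_integral_affineProfile_le hh.exponent_pos hm hβ' hβ (hle.trans_eq hbal.symm)

lemma le_affineProfile_of_balanced (hh : PowerConcave γ h) (h0 : h 0 ≠ 0) (hβ : 0 < β)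
    (hint : IntegrableOn h (Ioi 0))
    (hbal : ∫ s in Ioi 0, affineProfile γ (h 0 ^ γ) β s = ∫ s in Ioi 0, h s)
    {s : ℝ} (hs0 : s ≤ 0) : h s ≤ affineProfile γ (h 0 ^ γ) β s := by
  by_cases hs : h s = 0
  · exact hs.trans_le (affineProfile_nonneg s)
  have hm : 0 < h 0 ^ γ := Real.rpow_pos_of_pos ((hh.nonneg 0).lt_of_ne' h0) γ
  rw [le_affineProfile_iff hh.exponent_pos ((hh.nonneg s).lt_of_ne' hs)]
  by_contra! hlt
  have hs0' : s < 0 := hs0.lt_of_ne (by rintro rfl; simp at hlt)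
  set β' := (h 0 ^ γ - h s ^ γ) / s
  have hββ' : β < β' := (lt_div_iff_of_neg hs0').2 (by linarith)
  have hβ's : β' * s = h 0 ^ γ - h s ^ γ := div_mul_cancel₀ _ hs0'.ne
  -- The profile through `(s, h s)` and `(0, h 0)` is steeper than the balanced one, yet above `h`.
  have habove : ∀ t ∈ Ioi (0 : ℝ), h t ≤ affineProfile γ (h 0 ^ γ) β' t := fun t ht =>
    hh.le_affineProfile_of_neg_of_pos hs (by linarith) hs0' ht
  have hle := setIntegral_mono_on hint
    (integrableOn_Ioi_affineProfile hh.exponent_pos (hβ.trans hββ') 0) measurableSet_Ioi habove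
  exact hββ'.not_ge (le_of_integral_affineProfile_le hh.exponent_pos hm hβ (hβ.trans hββ')
    (hbal.trans_le hle))

lemma integral_Ioi_le_of_balanced (hh : PowerConcave γ h) (h0 : h 0 ≠ 0) (hβ : 0 < β)
    (hint : ∀ a, IntegrableOn h (Ioi a))
    (hbal : ∫ s in Ioi 0, affineProfile γ (h 0 ^ γ) β s = ∫ s in Ioi 0, h s)
    {a : ℝ} (ha : h a ≠ 0) :
    ∫ s in Ioi a, h s ≤ ∫ s in Ioi a, affineProfile γ (h 0 ^ γ) β s := by
  set L := affineProfile γ (h 0 ^ γ) β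
  have hL : ∀ a, IntegrableOn L (Ioi a) := integrableOn_Ioi_affineProfile hh.exponent_pos hβ
  rcases le_or_gt a 0 with ha0 | ha0
  · have hle : ∫ s in Ioc a 0, h s ≤ ∫ s in Ioc a 0, L s :=
      setIntegral_mono_on ((hint a).mono_set Ioc_subset_Ioi_self)
        ((hL a).mono_set Ioc_subset_Ioi_self) measurableSet_Ioc fun s hs =>
          hh.le_affineProfile_of_balanced h0 hβ (hint 0) hbal hs.2
    have hsplit := intervalIntegral.integral_Ioi_sub_Ioi (hint a) ha0
    have hsplitL := intervalIntegral.integral_Ioi_sub_Ioi (hL a) ha0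
    rw [intervalIntegral.integral_of_le ha0] at hsplit hsplitL
    linarith
  rcases le_or_gt (L a) (h a) with hLa | hLa
  · have hle : ∫ s in Ioc 0 a, L s ≤ ∫ s in Ioc 0 a, h s :=
      setIntegral_mono_on ((hL 0).mono_set Ioc_subset_Ioi_self)
        ((hint 0).mono_set Ioc_subset_Ioi_self) measurableSet_Ioc fun s hs =>
          hh.affineProfile_le h0 ha ((affineProfile_le_iff hh.exponent_pos (hh.nonneg a)).1 hLa)
            (Ioc_subset_Icc_self hs)
    have hsplit := intervalIntegral.integral_Ioi_sub_Ioi (hint 0) ha0.le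
    have hsplitL := intervalIntegral.integral_Ioi_sub_Ioi (hL 0) ha0.le
    rw [intervalIntegral.integral_of_le ha0.le] at hsplit hsplitL
    linarith
  · refine setIntegral_mono_on (hint a) (hL a) measurableSet_Ioi fun s hs => ?_
    by_contra! hLs
    have hs' : h s ≠ 0 := ((affineProfile_nonneg s).trans_lt hLs).ne'
    exact hLa.not_ge <| hh.affineProfile_le h0 hs'
      ((affineProfile_le_iff hh.exponent_pos (hh.nonneg s)).1 hLs.le) ⟨ha0.le, le_of_lt hs⟩

lemma tailFunctional_le_of_balanced (hh : PowerConcave γ h) (h0 : h 0 ≠ 0) (hβ : 0 < β)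
    (hint : ∀ a, IntegrableOn h (Ioi a))
    (hbal : ∫ s in Ioi 0, affineProfile γ (h 0 ^ γ) β s = ∫ s in Ioi 0, h s)
    {a : ℝ} (ha : h a ≠ 0) : tailFunctional γ β h a ≤ h 0 ^ γ := by
  have hβa := hh.mul_le_rpow_of_balanced h0 hβ (hint 0) hbal ha
  calc tailFunctional γ β h a
      ≤ tailFunctional γ β (affineProfile γ (h 0 ^ γ) β) a :=
        tailFunctional_le_tailFunctional hh.exponent_pos.le hβ.le
          (integral_nonneg hh.nonneg) (hh.integral_Ioi_le_of_balanced h0 hβ hint hbal ha)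
    _ = h 0 ^ γ := by
        rw [tailFunctional_affineProfile hh.exponent_pos hβ, max_eq_left (by linarith),
          sub_add_cancel]

theorem isGreatest_tailFunctional (hh : PowerConcave γ h)
    (h0 : 0 ∈ interior (Function.support h)) (hbdd : BddAbove (Function.support h))
    (hβ : β = γ * h 0 ^ (γ + 1) / ((γ + 1) * ∫ s in Ioi 0, h s)) :
    IsGreatest (tailFunctional γ β h '' tsupport h) (h 0 ^ γ) := by
  have hγ := hh.exponent_pos
  have h0' : h 0 ≠ 0 := interior_subset h0
  have h0_pos : 0 < h 0 := (hh.nonneg 0).lt_of_ne' h0'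
  have hint := hh.integrableOn_Ioi h0 hbdd
  have hI : 0 < ∫ s in Ioi 0, h s := hh.integral_Ioi_pos h0 hbdd
  have hβ_pos : 0 < β := by rw [hβ]; positivity
  have hbal : ∫ s in Ioi 0, affineProfile γ (h 0 ^ γ) β s = ∫ s in Ioi 0, h s := by
    rw [integral_Ioi_affineProfile hγ hβ_pos, mul_zero, sub_zero, max_eq_left (by positivity),
      ← Real.rpow_mul h0_pos.le, mul_div_cancel₀ _ hγ.ne', hβ]
    field_simp
  refine ⟨⟨0, subset_tsupport h h0', ?_⟩, ?_⟩
  · have hL := tailFunctional_affineProfile (m := h 0 ^ γ) hγ hβ_pos 0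
    rw [tailFunctional, ← hbal, ← tailFunctional, hL, mul_zero, sub_zero, add_zero,
      max_eq_left (by positivity)]
  · rintro _ ⟨a, ha, rfl⟩
    exact closure_minimal
      (fun s hs => hh.tailFunctional_le_of_balanced h0' hβ_pos hint hbal hs)
      (isClosed_le (continuous_tailFunctional hγ.le hint) continuous_const) ha

end PowerConcave

theorem Htilde_at_origin_general
    {E : Type*} [NormedAddCommGroup E] [NormedSpace ℝ E] [FiniteDimensional ℝ E]
    [MeasurableSpace E] [BorelSpace E] {μ : Measure E} [μ.IsAddHaarMeasure]
    {θ : E} (hθ : θ ≠ 0) {γ : ℝ} {f : E → ℝ} (hf : PowerConcave γ f)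
    (hf_int : Integrable f μ) (hf_pos : 0 < ∫ x, f x ∂μ) (hf_cent : ∫ x, f x • x ∂μ = 0)
    {β : ℝ} (hβ : β = γ * f 0 ^ (γ + 1) / ((γ + 1) * ∫ s in Ioi (0 : ℝ), f (s • θ))) :
    0 < f 0 ∧ 0 < (∫ s in Ioi (0 : ℝ), f (s • θ)) ∧
      IsGreatest (tailFunctional γ β (fun s => f (s • θ)) '' tsupport fun s : ℝ => f (s • θ))
        (f 0 ^ γ) := by
  have h0 := hf.zero_mem_interior_support hf_int hf_pos hf_cent
  have hray : PowerConcave γ fun s : ℝ => f (s • θ) :=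
    hf.comp_linearMap (LinearMap.toSpanSingleton ℝ E θ)
  have hray0 : 0 ∈ interior (Function.support fun s : ℝ => f (s • θ)) :=
    zero_mem_interior_preimage_smul h0 θ
  have hray_bdd : BddAbove (Function.support fun s : ℝ => f (s • θ)) :=
    bddAbove_preimage_smul (hf.isBounded_support hf_int hf_pos) hθ
  refine ⟨(hf.nonneg 0).lt_of_ne' (interior_subset h0), hray.integral_Ioi_pos hray0 hray_bdd, ?_⟩
  simpa only [zero_smul] using
    hray.isGreatest_tailFunctional hray0 hray_bdd (by simpa only [zero_smul] using hβ)

/-- With `β = γ f(0)^{γ+1} / ((γ+1) ∫_0^∞ f(sθ) ds)`, the auxiliary function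
`H̃` of a γ-concave function `f` with centroid at the origin satisfies
`H̃(o) = f(0)^γ`. -/
theorem Htilde_at_origin
    (n : ℕ) (hn : 1 ≤ n)
    (θ : EuclideanSpace ℝ (Fin n)) (hθ : ‖θ‖ = 1)
    (γ : ℝ) (hγ : 0 < γ)
    (f : EuclideanSpace ℝ (Fin n) → ℝ)
    (hf_nonneg : ∀ x, 0 ≤ f x)
    (hf_concave : ∀ x y : EuclideanSpace ℝ (Fin n), f x ≠ 0 → f y ≠ 0 →
      ∀ l : ℝ, 0 ≤ l → l ≤ 1 →
        (l * f x ^ γ + (1 - l) * f y ^ γ) ^ (1 / γ) ≤ f (l • x + (1 - l) • y))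
    (hf_cont : ContinuousOn f (tsupport f))
    (hf_int : Integrable f)
    (hf_pos : 0 < ∫ x, f x)
    (hf_cent_int : Integrable (fun x => f x • x))
    (hf_cent : (∫ x, f x • x) = (0 : EuclideanSpace ℝ (Fin n)))
    (β : ℝ)
    (hβ : β = γ * f 0 ^ (γ + 1) / ((γ + 1) * ∫ s in Ioi (0 : ℝ), f (s • θ)))
    (Ha : ℝ → ℝ)
    (hHa : ∀ a, Ha a =
      ((β * (γ + 1) / γ) * ∫ s in Ioi a, f (s • θ)) ^ (γ / (γ + 1)) + β * a) :
    -- in particular `f(0) > 0` and `∫_0^∞ f(sθ) ds > 0`,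
    0 < f 0 ∧ 0 < (∫ s in Ioi (0 : ℝ), f (s • θ)) ∧
    -- and `H̃(o) = f(0)^γ`.
    sSup (Ha '' tsupport fun s : ℝ => f (s • θ)) = f 0 ^ γ := by
  have hf := PowerConcave.of_rpow_mean_le hγ hf_nonneg hf_concave
  have hθ' : θ ≠ 0 := norm_pos_iff.1 (hθ ▸ one_pos)
  obtain ⟨hf0, hI, hmax⟩ := Htilde_at_origin_general hθ' hf hf_int hf_pos hf_cent hβ
  obtain rfl : Ha = tailFunctional γ β fun s => f (s • θ) := funext hHa
  exact ⟨hf0, hI, hmax.csSup_eq⟩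
end

section
/- Fix γ > 0, unit vectors θ, ξ ∈ S^{n-1} with ⟨θ,ξ⟩ > 0, real numbers r_0 < r_1, a constant m > 0, and an (n−1)-dimensional convex body D ⊂ ξ^⊥ whose centroid (taken within ξ^⊥) is at the origin. Let K_T = conv( r_0 θ , r_1 θ + D ) and T(x) = m · 𝟙_{K_T}(x) · ( −⟨x,ξ⟩ + r_1⟨θ,ξ⟩ )^{1/γ}. Then the centroid of T satisfies g(T) = [ ( nγ r_1 + (γ+1) r_0 ) / ( (n+1)γ + 1 ) ] θ. In particular, g(T) is at the origin if and only if r_0 = −( nγ/(γ+1) ) r_1. -/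
open MeasureTheory Set
open scoped RealInnerProductSpace

/-!
The map `(t, y) ↦ p + t (w + y)` parametrizes the cone with apex `p = r₀ θ` over the base
`p + w + D`, where `w = (r₁ - r₀) θ`, and in these coordinates Lebesgue measure is a multiple of
`t ^ (n - 1) dt dy`. The density `T` depends on the height `t` alone: it is a multiple of
`(1 - t) ^ (1 / γ)`. Hence the centroid of `T` is `p + s (w + g)`, where `g` is the centroid of `D`
and `s` is that of `(1 - t) ^ (1 / γ)` on `[0, 1]` with respect to `t ^ (n - 1) dt`. The latter is a
quotient of two Beta integrals, and the recurrence of the Beta function evaluates it to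
`s = n / (n + 1 + 1 / γ)`.
-/

open Measure Module
open scoped NNReal

section Beta

theorem integral_rpow_mul_one_sub_rpow {α β : ℝ} (hα : 0 < α) (hβ : 0 < β) :
    ∫ t in (0 : ℝ)..1, t ^ (α - 1) * (1 - t) ^ (β - 1) = ProbabilityTheory.beta α β := by
  have complex_eq_real : Complex.betaIntegral α β =
      ((∫ t in (0 : ℝ)..1, t ^ (α - 1) * (1 - t) ^ (β - 1) : ℝ) : ℂ) := by
    rw [Complex.betaIntegral, ← intervalIntegral.integral_ofReal]
    refine intervalIntegral.integral_congr fun t ht => ?_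
    rw [uIcc_of_le zero_le_one] at ht
    push_cast [Complex.ofReal_cpow ht.1, Complex.ofReal_cpow (sub_nonneg.2 ht.2)]
    rfl
  rw [ProbabilityTheory.beta_eq_betaIntegralReal α β hα hβ, complex_eq_real, Complex.ofReal_re]

theorem add_mul_beta_add_one_left {α β : ℝ} (hα : 0 < α) (hβ : 0 < β) :
    (α + β) * ProbabilityTheory.beta (α + 1) β = α * ProbabilityTheory.beta α β := by
  have hne : α + β ≠ 0 := by positivity
  have hΓ : Real.Gamma (α + β) ≠ 0 := (Real.Gamma_pos_of_pos (by positivity)).ne'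
  rw [ProbabilityTheory.beta, ProbabilityTheory.beta, add_right_comm,
    Real.Gamma_add_one hα.ne', Real.Gamma_add_one hne]
  field_simp

end Beta

section Centroid

variable {E : Type*} [NormedAddCommGroup E] [NormedSpace ℝ E] [MeasurableSpace E]

/-- The centroid `(∫ T)⁻¹ ∫ T(x) x` of a density `T` with respect to `μ`. -/
noncomputable def centroid (μ : Measure E) (T : E → ℝ) : E :=
  (∫ x, T x ∂μ)⁻¹ • ∫ x, T x • x ∂μ

theorem centroid_const_mul (μ : Measure E) {m : ℝ} (hm : m ≠ 0) (T : E → ℝ) :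
    centroid μ (fun x => m * T x) = centroid μ T := by
  simp only [centroid, integral_const_mul, mul_smul, integral_smul]
  rw [smul_smul, mul_inv_rev, inv_mul_cancel_right₀ hm]

theorem centroid_indicator {μ : Measure E} {K : Set E} (hK : MeasurableSet K) (T : E → ℝ) :
    centroid μ (K.indicator T) = centroid (μ.restrict K) T := by
  simp only [centroid, ← integral_indicator hK, indicator_smul_left]

theorem centroid_smul_measure {c : ℝ≥0} (hc : c ≠ 0) (μ : Measure E) (T : E → ℝ) :
    centroid (c • μ) T = centroid μ T := by
  have hc' : (c : ℝ) ≠ 0 := NNReal.coe_ne_zero.2 hc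
  simp only [centroid, integral_smul_nnreal_measure, NNReal.smul_def, smul_eq_mul, smul_smul]
  rw [mul_inv_rev, inv_mul_cancel_right₀ hc']

end Centroid

section RadialMeasure

/-- The measure `t ^ k dt` on `[0, 1]`: the distribution of the height in a cone over a
`k`-dimensional base, up to a constant. The density is written `|t| ^ k`, the Jacobian of scaling by
`t` in dimension `k`. -/
noncomputable def radialMeasure (k : ℕ) : Measure ℝ :=
  (volume.restrict (Icc 0 1)).withDensity fun t => ENNReal.ofReal (|t| ^ k)

instance (k : ℕ) : SFinite (radialMeasure k) := by
  unfold radialMeasure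
  infer_instance

theorem ae_mem_Icc_radialMeasure (k : ℕ) : ∀ᵐ t ∂radialMeasure k, t ∈ Icc (0 : ℝ) 1 :=
  (withDensity_absolutelyContinuous _ _).ae_le (ae_restrict_mem measurableSet_Icc)

theorem integral_radialMeasure (k : ℕ) (g : ℝ → ℝ) :
    ∫ t, g t ∂radialMeasure k = ∫ t in (0 : ℝ)..1, t ^ k * g t := by
  rw [radialMeasure, integral_withDensity_eq_integral_toReal_smul (by fun_prop) (by simp),
    intervalIntegral.integral_of_le zero_le_one, ← integral_Icc_eq_integral_Ioc]
  refine setIntegral_congr_fun measurableSet_Icc fun t ht => ?_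
  simp [abs_of_nonneg ht.1, ht.1]

theorem integral_one_sub_rpow_radialMeasure (k : ℕ) {a : ℝ} (ha : -1 < a) :
    ∫ t, (1 - t) ^ a ∂radialMeasure k = ProbabilityTheory.beta (k + 1) (a + 1) := by
  rw [integral_radialMeasure, ← integral_rpow_mul_one_sub_rpow (by positivity) (by linarith)]
  simp

theorem integral_one_sub_rpow_radialMeasure_pos (k : ℕ) {a : ℝ} (ha : -1 < a) :
    0 < ∫ t, (1 - t) ^ a ∂radialMeasure k := by
  rw [integral_one_sub_rpow_radialMeasure k ha]
  exact ProbabilityTheory.beta_pos (by positivity) (by linarith)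

theorem centroid_radialMeasure_one_sub_rpow (k : ℕ) {a : ℝ} (ha : -1 < a) :
    centroid (radialMeasure k) (fun t => (1 - t) ^ a) = (k + 1) / (k + 2 + a) := by
  have first_moment : ∫ t, (1 - t) ^ a • t ∂radialMeasure k =
      ProbabilityTheory.beta (k + 1 + 1) (a + 1) := by
    have h := integral_one_sub_rpow_radialMeasure (k + 1) ha
    rw [integral_radialMeasure] at h ⊢
    push_cast at h
    rw [← h]
    congr! 2 with t
    rw [smul_eq_mul]
    ring
  have ha' : 0 < a + 1 := by linarith
  have hk : (0 : ℝ) < k + 1 := by positivity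
  have recurrence := add_mul_beta_add_one_left hk ha'
  have beta_pos := ProbabilityTheory.beta_pos hk ha'
  rw [centroid, integral_one_sub_rpow_radialMeasure k ha, first_moment, smul_eq_mul,
    inv_mul_eq_div, div_eq_div_iff beta_pos.ne' (by linarith)]
  linarith

end RadialMeasure

section ConeCoordinates

theorem map_smul_prod_withDensity {F : Type*} [NormedAddCommGroup F] [NormedSpace ℝ F]
    [FiniteDimensional ℝ F] [MeasurableSpace F] [BorelSpace F] (ρ : Measure ℝ) [SigmaFinite ρ]
    [NullSingletonClass ρ] (ν : Measure F) [ν.IsAddHaarMeasure] :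
    ((ρ.withDensity fun t => ENNReal.ofReal (|t| ^ finrank ℝ F)).prod ν).map
      (fun z : ℝ × F => (z.1, z.1 • z.2)) = ρ.prod ν := by
  refine (Measure.prod_eq fun s t hs ht => ?_).symm
  have hmeas : Measurable fun z : ℝ × F => (z.1, z.1 • z.2) := by fun_prop
  have slice (r : ℝ) : Prod.mk r ⁻¹' ((fun z : ℝ × F => (z.1, z.1 • z.2)) ⁻¹' s ×ˢ t) =
      {y | r ∈ s ∧ r • y ∈ t} := rfl
  have density_mul_slice : ∀ᵐ r ∂ρ, ENNReal.ofReal (|r| ^ finrank ℝ F) *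
      ν {y | r ∈ s ∧ r • y ∈ t} = s.indicator (fun _ => ν t) r := by
    filter_upwards [compl_mem_ae_iff.2 (measure_singleton (μ := ρ) 0)] with r hr
    by_cases hrs : r ∈ s
    · have hpos : 0 < |r| ^ finrank ℝ F := pow_pos (abs_pos.2 hr) _
      simp only [hrs, true_and, indicator_of_mem]
      rw [show {y : F | r • y ∈ t} = (r • ·) ⁻¹' t from rfl, addHaar_preimage_smul ν hr,
        ← mul_assoc, ← ENNReal.ofReal_mul hpos.le, abs_inv, abs_pow, mul_inv_cancel₀ hpos.ne',
        ENNReal.ofReal_one, one_mul]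
    · simp [hrs]
  have hpre := hmeas (hs.prod ht)
  rw [map_apply hmeas (hs.prod ht), prod_apply hpre,
    lintegral_withDensity_eq_lintegral_mul _ (by fun_prop) (measurable_measure_prodMk_left hpre)]
  simp only [Pi.mul_apply, slice]
  rw [lintegral_congr_ae density_mul_slice, lintegral_indicator_const hs, mul_comm]

variable {E : Type*} [NormedAddCommGroup E] [NormedSpace ℝ E] {H : Submodule ℝ E}

/-- Coordinates on the cone with apex `p` and axis `w` over a base in `H`: the point at
height `t` on the segment from `p` to the point `p + w + y` of the base. -/
def coneMap (p w : E) (z : ℝ × H) : E := p + (z.1 • w + ((z.1 • z.2 : H) : E))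

theorem continuous_coneMap (p w : E) : Continuous (coneMap p w : ℝ × H → E) := by
  unfold coneMap
  fun_prop

theorem convexHull_insert_translate_eq_image_coneMap (p q : E) {D : Set H} (hD : Convex ℝ D)
    (hne : D.Nonempty) :
    convexHull ℝ (insert p ((fun d => q + d) '' ((↑) '' D))) =
      coneMap p (q - p) '' (Icc 0 1 ×ˢ D) := by
  have base_convex : Convex ℝ ((fun d => q + d) '' ((↑) '' D)) :=
    (hD.linear_image H.subtype).translate q
  rw [convexHull_insert ((hne.image _).image _), base_convex.convexHull_eq]
  ext x
  simp only [mem_convexJoin, mem_singleton_iff, exists_eq_left, segment_eq_image', mem_image,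
    mem_prod, Prod.exists, coneMap, exists_exists_and_eq_and, Submodule.coe_smul]
  constructor
  · rintro ⟨d, hd, t, ht, rfl⟩
    exact ⟨t, d, ⟨ht, hd⟩, by module⟩
  · rintro ⟨t, d, ⟨ht, hd⟩, rfl⟩
    exact ⟨d, hd, t, ht, by module⟩

theorem injective_smul_add_coe {w : E} (hw : w ∉ H) :
    Function.Injective fun z : ℝ × H => z.1 • w + (z.2 : E) := by
  rintro ⟨s, y⟩ ⟨t, z⟩ (h : s • w + (y : E) = t • w + z)
  have hmem : (s - t) • w ∈ H := by
    have : (s - t) • w = ((z - y : H) : E) := by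
      rw [sub_smul, Submodule.coe_sub, sub_eq_sub_iff_add_eq_add, h, add_comm]
    exact this ▸ (z - y).2
  obtain rfl : s = t := by
    by_contra hst
    exact hw ((H.smul_mem_iff (sub_ne_zero.2 hst)).1 hmem)
  exact Prod.ext rfl (Subtype.ext (add_left_cancel h))

theorem coneMap_mem_image_iff (p : E) {w : E} (hw : w ∉ H) {I : Set ℝ} {D : Set H} {z : ℝ × H}
    (hz : z.1 ≠ 0) : coneMap p w z ∈ coneMap p w '' (I ×ˢ D) ↔ z ∈ I ×ˢ D := by
  refine ⟨?_, mem_image_of_mem _⟩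
  rintro ⟨z', hz', h⟩
  obtain ⟨h₁, h₂⟩ := Prod.ext_iff.1 (@injective_smul_add_coe _ _ _ H w hw
    (z'.1, z'.1 • z'.2) (z.1, z.1 • z.2) (add_left_cancel h))
  dsimp only at h₁ h₂
  rw [h₁] at h₂
  exact (Prod.ext h₁ (smul_right_injective H hz h₂) : z' = z) ▸ hz'

variable [MeasurableSpace E]

theorem integral_prod_smul_coneMap [CompleteSpace E] (p w : E) {ρ : Measure ℝ} [SFinite ρ]
    (N : Measure H) [IsFiniteMeasure N] {φ : ℝ → ℝ} (hφ : ∫ t, φ t ∂ρ ≠ 0)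
    (htφ : Integrable (fun t => φ t * t) ρ) (hN : Integrable (fun y : H => (y : E)) N) :
    ∫ z, φ z.1 • coneMap p w z ∂ρ.prod N =
      (N.real univ * ∫ t, φ t ∂ρ) • (p + centroid ρ φ • (w + ⨍ y, (y : E) ∂N)) := by
  have apex_integrable : Integrable (fun z : ℝ × H => φ z.1 • p) (ρ.prod N) :=
    (Integrable.of_integral_ne_zero hφ).smul_prod (integrable_const p)
  have base_integrable : Integrable (fun y : H => w + (y : E)) N := (integrable_const w).add hN
  have first_moment : ∫ t, φ t * t ∂ρ = (∫ t, φ t ∂ρ) * centroid ρ φ := by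
    simp only [centroid, smul_eq_mul, mul_inv_cancel_left₀ hφ]
  have base_moment : ∫ y, (w + (y : E)) ∂N = N.real univ • (w + ⨍ y, (y : E) ∂N) := by
    rw [integral_add (integrable_const w) hN, integral_const, smul_add, measure_smul_average]
  calc ∫ z, φ z.1 • coneMap p w z ∂ρ.prod N
      = ∫ z : ℝ × H, φ z.1 • p + (φ z.1 * z.1) • (w + (z.2 : E)) ∂ρ.prod N := by
        congr! 2 with z
        simp only [coneMap, Submodule.coe_smul]
        module
    _ = (∫ t, φ t ∂ρ) • N.real univ • p + (∫ t, φ t * t ∂ρ) • ∫ y, (w + (y : E)) ∂N := by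
        rw [integral_add apex_integrable (htφ.smul_prod base_integrable),
          integral_prod_smul φ fun _ : H => p,
          integral_prod_smul (fun t => φ t * t) fun y : H => w + (y : E), integral_const]
    _ = (N.real univ * ∫ t, φ t ∂ρ) • (p + centroid ρ φ • (w + ⨍ y, (y : E) ∂N)) := by
        rw [first_moment, base_moment]
        module

theorem centroid_map_coneMap [CompleteSpace E] [SecondCountableTopology E] [BorelSpace E]
    (p w : E) {ρ : Measure ℝ} [SFinite ρ] (N : Measure H) [IsFiniteMeasure N] [NeZero N]
    {f : E → ℝ} (hf : Measurable f) {φ : ℝ → ℝ}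
    (hfφ : ∀ᵐ z ∂ρ.prod N, f (coneMap p w z) = φ z.1) (hφ : ∫ t, φ t ∂ρ ≠ 0)
    (htφ : Integrable (fun t => φ t * t) ρ) (hN : Integrable (fun y : H => (y : E)) N) :
    centroid ((ρ.prod N).map (coneMap p w)) f =
      p + centroid ρ φ • (w + ⨍ y, (y : E) ∂N) := by
  have hcone : Measurable (coneMap p w : ℝ × H → E) := (continuous_coneMap p w).measurable
  have mass : ∫ x, f x ∂(ρ.prod N).map (coneMap p w) = N.real univ * ∫ t, φ t ∂ρ := by
    rw [integral_map hcone.aemeasurable hf.aestronglyMeasurable, integral_congr_ae hfφ,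
      integral_fun_fst, smul_eq_mul]
  have moment : ∫ x, f x • x ∂(ρ.prod N).map (coneMap p w) =
      (N.real univ * ∫ t, φ t ∂ρ) • (p + centroid ρ φ • (w + ⨍ y, (y : E) ∂N)) := by
    have hfx : Measurable fun x => f x • x := hf.smul measurable_id
    rw [integral_map hcone.aemeasurable hfx.aestronglyMeasurable,
      ← integral_prod_smul_coneMap p w N hφ htφ hN]
    refine integral_congr_ae ?_
    filter_upwards [hfφ] with z hz
    rw [hz]
  rw [centroid, mass, moment, inv_smul_smul₀ (mul_ne_zero measureReal_univ_ne_zero hφ)]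

variable [FiniteDimensional ℝ E] [BorelSpace E]
  (μ : Measure E) [μ.IsAddHaarMeasure] (ν : Measure H) [ν.IsAddHaarMeasure]

theorem exists_eq_smul_map_add_smul_add_coe (p : E) {w : E} (hw : w ∉ H)
    (hH : finrank ℝ E = finrank ℝ H + 1) :
    ∃ c : ℝ≥0, c ≠ 0 ∧
      μ = c • (volume.prod ν).map fun z : ℝ × H => p + (z.1 • w + (z.2 : E)) := by
  let L₀ : (ℝ × H) →ₗ[ℝ] E := (LinearMap.toSpanSingleton ℝ E w).coprod H.subtype
  have hL₀ : Function.Injective L₀ := injective_smul_add_coe hw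
  let L : (ℝ × H) ≃L[ℝ] E := (LinearEquiv.ofInjectiveOfFinrankEq L₀ hL₀
    (by simp [hH, add_comm])).toContinuousLinearEquiv
  have map_translate : (volume.prod ν).map (fun z : ℝ × H => p + (z.1 • w + (z.2 : E))) =
      (volume.prod ν).map L := by
    rw [← map_add_left_eq_self ((volume.prod ν).map L) p,
      Measure.map_map (by fun_prop) L.continuous.measurable]
    rfl
  rw [map_translate]
  exact ⟨_, (addHaarScalarFactor_pos_of_isAddHaarMeasure μ _).ne', isAddLeftInvariant_eq_smul μ _⟩

theorem exists_restrict_cone_eq_smul_map_coneMap (p : E) {w : E} (hw : w ∉ H)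
    (hH : finrank ℝ E = finrank ℝ H + 1) :
    ∃ c : ℝ≥0, c ≠ 0 ∧ ∀ D : Set H, IsCompact D →
      μ.restrict (coneMap p w '' (Icc 0 1 ×ˢ D)) =
        c • ((radialMeasure (finrank ℝ H)).prod (ν.restrict D)).map (coneMap p w) := by
  obtain ⟨c, hc, hμ⟩ := exists_eq_smul_map_add_smul_add_coe μ ν p hw hH
  refine ⟨c, hc, fun D hD => ?_⟩
  set K := coneMap p w '' (Icc 0 1 ×ˢ D)
  set ρ : Measure ℝ := volume.withDensity fun t => ENNReal.ofReal (|t| ^ finrank ℝ H)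
  have hcone : Measurable (coneMap p w : ℝ × H → E) := (continuous_coneMap p w).measurable
  have hK : MeasurableSet K :=
    ((isCompact_Icc.prod hD).image (continuous_coneMap p w)).measurableSet
  have polar : μ = c • (ρ.prod ν).map (coneMap p w) := by
    rw [hμ, ← map_smul_prod_withDensity volume ν, Measure.map_map (by fun_prop) (by fun_prop)]
    rfl
  have height_ne_zero : ∀ᵐ z ∂ρ.prod ν, z.1 ≠ 0 :=
    quasiMeasurePreserving_fst.ae
      ((withDensity_absolutelyContinuous _ _).ae_le (compl_mem_ae_iff.2 (measure_singleton 0)))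
  have preimage_cone : coneMap p w ⁻¹' K =ᵐ[ρ.prod ν] Icc 0 1 ×ˢ D := by
    filter_upwards [height_ne_zero] with z hz
    exact propext (coneMap_mem_image_iff p hw hz)
  rw [polar, Measure.restrict_smul, restrict_map hcone hK, restrict_congr_set preimage_cone,
    ← prod_restrict, restrict_withDensity measurableSet_Icc, radialMeasure]

theorem centroid_indicator_cone (p : E) {w : E} (hw : w ∉ H)
    (hH : finrank ℝ E = finrank ℝ H + 1) {D : Set H} (hD : IsCompact D) (hνD : ν D ≠ 0)
    {f : E → ℝ} (hf : Measurable f) {φ : ℝ → ℝ}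
    (hfφ : ∀ t ∈ Icc (0 : ℝ) 1, ∀ y ∈ D, f (coneMap p w (t, y)) = φ t)
    (hφ : ∫ t, φ t ∂radialMeasure (finrank ℝ H) ≠ 0) :
    centroid μ ((coneMap p w '' (Icc 0 1 ×ˢ D)).indicator f) =
      p + centroid (radialMeasure (finrank ℝ H)) φ • (w + ⨍ y in D, (y : E) ∂ν) := by
  obtain ⟨c, hc, hμ⟩ := exists_restrict_cone_eq_smul_map_coneMap μ ν p hw hH
  have : IsFiniteMeasure (ν.restrict D) := ⟨by simpa using hD.measure_lt_top⟩
  have : NeZero (ν.restrict D) := ⟨by simpa using hνD⟩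
  have f_eq_φ : ∀ᵐ z ∂(radialMeasure (finrank ℝ H)).prod (ν.restrict D),
      f (coneMap p w z) = φ z.1 := by
    filter_upwards [quasiMeasurePreserving_fst.ae (ae_mem_Icc_radialMeasure _),
      quasiMeasurePreserving_snd.ae (ae_restrict_mem hD.measurableSet)] with z ht hy
    exact hfφ z.1 ht z.2 hy
  have htφ : Integrable (fun t => φ t * t) (radialMeasure (finrank ℝ H)) :=
    (Integrable.of_integral_ne_zero hφ).mul_bdd (c := 1) (by fun_prop) <| by
      filter_upwards [ae_mem_Icc_radialMeasure _] with t ht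
      exact (Real.norm_of_nonneg ht.1).trans_le ht.2
  rw [centroid_indicator ((isCompact_Icc.prod hD).image (continuous_coneMap p w)).measurableSet,
    hμ D hD, centroid_smul_measure hc]
  exact centroid_map_coneMap p w _ hf f_eq_φ hφ htφ
    (continuous_subtype_val.continuousOn.integrableOn_compact hD)

end ConeCoordinates

section Hausdorff

theorem setAverage_hausdorffMeasure_image {X Y G : Type*} [MetricSpace X] [MeasurableSpace X]
    [BorelSpace X] [MetricSpace Y] [MeasurableSpace Y] [BorelSpace Y] [NormedAddCommGroup G]
    [NormedSpace ℝ G] {e : X → Y} (he : Isometry e) (he' : MeasurableEmbedding e) {d : ℝ}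
    (hd : 0 ≤ d) (g : Y → G) (D : Set X) :
    ⨍ y in e '' D, g y ∂μH[d] = ⨍ x in D, g (e x) ∂μH[d] := by
  have measure_eq : μH[d] (e '' D) = μH[d] D := he.hausdorffMeasure_image (.inl hd) D
  have integral_eq : ∫ y in e '' D, g y ∂μH[d] = ∫ x in D, g (e x) ∂μH[d] := by
    have h := he'.setIntegral_map (μ := μH[d]) g (e '' D)
    rwa [he.map_hausdorffMeasure (.inl hd), restrict_restrict' he'.measurableSet_range,
      inter_eq_left.2 (image_subset_range e D), preimage_image_eq D he'.injective] at h
  rw [setAverage_eq, setAverage_eq, measureReal_def, measure_eq, integral_eq, measureReal_def]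

end Hausdorff

section ModelFunction

variable {E : Type*} [NormedAddCommGroup E] [InnerProductSpace ℝ E]

/-- The function `m 𝟙_K(x) (-⟨x, ξ⟩ + r₁ ⟨θ, ξ⟩) ^ a` on the cone `K = conv (r₀ θ, r₁ θ + D)`;
the model `γ`-affine function is the case `a = 1 / γ`. -/
noncomputable def modelFunction (m a : ℝ) (θ ξ : E) (r₀ r₁ : ℝ) (D : Set E) (x : E) : ℝ :=
  m * (convexHull ℝ (insert (r₀ • θ) ((fun d => r₁ • θ + d) '' D))).indicator
    (fun y => (-⟪y, ξ⟫ + r₁ * ⟪θ, ξ⟫) ^ a) x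

theorem neg_inner_coneMap_add {θ ξ : E} (r₀ r₁ t : ℝ) (y : (ℝ ∙ ξ)ᗮ) :
    -⟪coneMap (r₀ • θ) (r₁ • θ - r₀ • θ) (t, y), ξ⟫ + r₁ * ⟪θ, ξ⟫ =
      (r₁ - r₀) * ⟪θ, ξ⟫ * (1 - t) := by
  have hy : ⟪(y : E), ξ⟫ = 0 := Submodule.mem_orthogonal_singleton_iff_inner_left.1 y.2
  simp only [coneMap, Submodule.coe_smul, inner_add_left, inner_sub_left, real_inner_smul_left, hy]
  ring

theorem finrank_eq_finrank_orthogonal_span_singleton_add_one [FiniteDimensional ℝ E] {ξ : E}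
    (hξ : ξ ≠ 0) : finrank ℝ E = finrank ℝ (ℝ ∙ ξ)ᗮ + 1 := by
  rw [← Submodule.finrank_add_finrank_orthogonal (ℝ ∙ ξ), finrank_span_singleton hξ, add_comm]

variable [FiniteDimensional ℝ E] [MeasurableSpace E] [BorelSpace E] (μ : Measure E)
  [μ.IsAddHaarMeasure] {a : ℝ} {θ ξ : E} {r₀ r₁ m : ℝ}

theorem centroid_modelFunction_image_coe (ha : -1 < a) (hθξ : 0 < ⟪θ, ξ⟫) (hr : r₀ < r₁)
    (hm : m ≠ 0) (ν : Measure (ℝ ∙ ξ)ᗮ) [ν.IsAddHaarMeasure] {D : Set (ℝ ∙ ξ)ᗮ}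
    (hD_conv : Convex ℝ D) (hD_comp : IsCompact D) (hνD : ν D ≠ 0) :
    centroid μ (modelFunction m a θ ξ r₀ r₁ ((↑) '' D)) =
      r₀ • θ + (finrank ℝ E / (finrank ℝ E + 1 + a)) •
        (r₁ • θ - r₀ • θ + ⨍ y in D, (y : E) ∂ν) := by
  have hξ : ξ ≠ 0 := by rintro rfl; simp at hθξ
  have hH := finrank_eq_finrank_orthogonal_span_singleton_add_one hξ
  have height_pos : 0 < (r₁ - r₀) * ⟪θ, ξ⟫ := mul_pos (sub_pos.2 hr) hθξ
  have hw : r₁ • θ - r₀ • θ ∉ (ℝ ∙ ξ)ᗮ := by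
    rw [Submodule.mem_orthogonal_singleton_iff_inner_left, ← sub_smul, real_inner_smul_left]
    exact height_pos.ne'
  have density_eq : ∀ t ∈ Icc (0 : ℝ) 1, ∀ y ∈ D,
      (-⟪coneMap (r₀ • θ) (r₁ • θ - r₀ • θ) (t, y), ξ⟫ + r₁ * ⟪θ, ξ⟫) ^ a =
        ((r₁ - r₀) * ⟪θ, ξ⟫) ^ a * (1 - t) ^ a := fun t ht y _ => by
    rw [neg_inner_coneMap_add, Real.mul_rpow height_pos.le (sub_nonneg.2 ht.2)]
  have scale_ne : ((r₁ - r₀) * ⟪θ, ξ⟫) ^ a ≠ 0 := (Real.rpow_pos_of_pos height_pos a).ne'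
  have mass_ne : ∫ t, ((r₁ - r₀) * ⟪θ, ξ⟫) ^ a * (1 - t) ^ a
      ∂radialMeasure (finrank ℝ (ℝ ∙ ξ)ᗮ) ≠ 0 := by
    rw [integral_const_mul]
    exact mul_ne_zero scale_ne (integral_one_sub_rpow_radialMeasure_pos _ ha).ne'
  unfold modelFunction
  rw [centroid_const_mul μ hm, convexHull_insert_translate_eq_image_coneMap _ _ hD_conv
      (nonempty_of_measure_ne_zero hνD),
    centroid_indicator_cone μ ν _ hw hH hD_comp hνD (by fun_prop) density_eq mass_ne,
    centroid_const_mul _ scale_ne, centroid_radialMeasure_one_sub_rpow _ ha, hH]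
  push_cast
  congr! 3
  ring

theorem centroid_modelFunction (ha : -1 < a) (hθξ : 0 < ⟪θ, ξ⟫) (hr : r₀ < r₁) (hm : m ≠ 0)
    {D : Set E} (hD_conv : Convex ℝ D) (hD_comp : IsCompact D) (hD_sub : D ⊆ {x | ⟪x, ξ⟫ = 0})
    (hD_pos : 0 < μH[(finrank ℝ E : ℝ) - 1] D) :
    centroid μ (modelFunction m a θ ξ r₀ r₁ D) =
      r₀ • θ + (finrank ℝ E / (finrank ℝ E + 1 + a)) •
        (r₁ • θ - r₀ • θ + ⨍ x in D, x ∂μH[(finrank ℝ E : ℝ) - 1]) := by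
  have hξ : ξ ≠ 0 := by rintro rfl; simp at hθξ
  have hdim : (finrank ℝ E : ℝ) - 1 = finrank ℝ (ℝ ∙ ξ)ᗮ := by
    rw [finrank_eq_finrank_orthogonal_span_singleton_add_one hξ]
    push_cast
    ring
  have hdim_nonneg : (0 : ℝ) ≤ finrank ℝ (ℝ ∙ ξ)ᗮ := Nat.cast_nonneg _
  have D_subset_range : D ⊆ range ((↑) : (ℝ ∙ ξ)ᗮ → E) := fun x hx =>
    ⟨⟨x, Submodule.mem_orthogonal_singleton_iff_inner_left.2 (hD_sub hx)⟩, rfl⟩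
  obtain ⟨D, rfl⟩ := subset_range_iff_exists_image_eq.1 D_subset_range
  have coe_emb : Topology.IsClosedEmbedding ((↑) : (ℝ ∙ ξ)ᗮ → E) :=
    (Submodule.closed_of_finiteDimensional _).isClosedEmbedding_subtypeVal
  have D_conv : Convex ℝ D := by
    simpa [preimage_image_eq D Subtype.val_injective] using
      hD_conv.linear_preimage (ℝ ∙ ξ)ᗮ.subtype
  rw [hdim, isometry_subtype_coe.hausdorffMeasure_image (.inl hdim_nonneg)] at hD_pos
  rw [hdim, setAverage_hausdorffMeasure_image isometry_subtype_coe coe_emb.measurableEmbedding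
    hdim_nonneg]
  exact centroid_modelFunction_image_coe μ ha hθξ hr hm _ D_conv
    (coe_emb.isEmbedding.isCompact_iff.2 hD_comp) hD_pos.ne'

theorem model_function_centroid_general {γ : ℝ} (hγ₀ : γ ≠ 0) (hγ : -1 < 1 / γ)
    (hθξ : 0 < ⟪θ, ξ⟫) (hr : r₀ < r₁) (hm : m ≠ 0) {D : Set E} (hD_conv : Convex ℝ D)
    (hD_comp : IsCompact D) (hD_sub : D ⊆ {x | ⟪x, ξ⟫ = 0}) {n : ℕ} (hn : finrank ℝ E = n)
    (hD_pos : 0 < μH[(n : ℝ) - 1] D) (hD_cent : ⨍ x in D, x ∂μH[(n : ℝ) - 1] = 0) :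
    centroid μ (modelFunction m (1 / γ) θ ξ r₀ r₁ D) =
        ((n * γ * r₁ + (γ + 1) * r₀) / ((n + 1) * γ + 1)) • θ ∧
      (centroid μ (modelFunction m (1 / γ) θ ξ r₀ r₁ D) = 0 ↔
        r₀ = -(n * γ / (γ + 1)) * r₁) := by
  subst hn
  have hθ : θ ≠ 0 := by rintro rfl; simp at hθξ
  have apex_denom_ne : γ + 1 ≠ 0 := by
    rintro h
    norm_num [eq_neg_of_add_eq_zero_left h] at hγ
  have denom_ne : ((finrank ℝ E : ℝ) + 1) * γ + 1 ≠ 0 := by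
    have hpos : 0 < (finrank ℝ E : ℝ) + 1 + 1 / γ := by
      linarith [Nat.cast_nonneg (α := ℝ) (finrank ℝ E)]
    have factor : ((finrank ℝ E : ℝ) + 1) * γ + 1 = γ * (finrank ℝ E + 1 + 1 / γ) := by
      field_simp
    exact factor ▸ mul_ne_zero hγ₀ hpos.ne'
  have centroid_eq : centroid μ (modelFunction m (1 / γ) θ ξ r₀ r₁ D) =
      ((finrank ℝ E * γ * r₁ + (γ + 1) * r₀) / ((finrank ℝ E + 1) * γ + 1)) • θ := by
    rw [centroid_modelFunction μ hγ hθξ hr hm hD_conv hD_comp hD_sub hD_pos, hD_cent, add_zero,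
      ← sub_smul, smul_smul, ← add_smul]
    congr 1
    field_simp
    ring
  refine ⟨centroid_eq, ?_⟩
  rw [centroid_eq, smul_eq_zero_iff_left hθ, div_eq_zero_iff, or_iff_left denom_ne]
  field_simp
  grind

end ModelFunction

/-- **The centroid of the model γ-affine function.** For
`T(x) = m 𝟙_{K_T}(x) (-⟨x,ξ⟩ + r₁⟨θ,ξ⟩)^{1/γ}` with
`K_T = conv( r₀θ , r₁θ + D )`, the centroid of `T` is
`g(T) = [ (nγr₁ + (γ+1)r₀) / ((n+1)γ+1) ] θ`; in particular `g(T)` is at the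
origin iff `r₀ = -(nγ/(γ+1)) r₁`. -/
theorem model_function_centroid
    (n : ℕ) (hn : 1 ≤ n)
    (γ : ℝ) (hγ : 0 < γ)
    (θ ξ : EuclideanSpace ℝ (Fin n)) (hθ : ‖θ‖ = 1) (hξ : ‖ξ‖ = 1)
    (hθξ : 0 < ⟪θ, ξ⟫)
    (r₀ r₁ : ℝ) (hr : r₀ < r₁)
    (m : ℝ) (hm : 0 < m)
    (D : Set (EuclideanSpace ℝ (Fin n)))
    (hD_conv : Convex ℝ D) (hD_comp : IsCompact D)
    (hD_sub : D ⊆ {x | ⟪x, ξ⟫ = 0})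
    (hD_pos : 0 < μH[(n : ℝ) - 1] D)
    (hD_cent : (μH[(n : ℝ) - 1] D).toReal⁻¹ • (∫ x in D, x ∂μH[(n : ℝ) - 1]) =
      (0 : EuclideanSpace ℝ (Fin n)))
    (KT : Set (EuclideanSpace ℝ (Fin n)))
    (hKT : KT = convexHull ℝ (insert (r₀ • θ) ((fun d => r₁ • θ + d) '' D)))
    (T : EuclideanSpace ℝ (Fin n) → ℝ)
    (hT : ∀ x, T x = m * KT.indicator (fun y => (-⟪y, ξ⟫ + r₁ * ⟪θ, ξ⟫) ^ (1 / γ)) x) :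
    (∫ x, T x)⁻¹ • (∫ x, T x • x) =
        ((n * γ * r₁ + (γ + 1) * r₀) / ((n + 1) * γ + 1)) • θ ∧
      ((∫ x, T x)⁻¹ • (∫ x, T x • x) = (0 : EuclideanSpace ℝ (Fin n)) ↔
        r₀ = -(n * γ / (γ + 1)) * r₁) := by
  subst hKT
  obtain rfl : T = modelFunction m (1 / γ) θ ξ r₀ r₁ D := funext hT
  exact model_function_centroid_general volume hγ.ne' (by linarith [one_div_pos.2 hγ]) hθξ hr hm.ne'
    hD_conv hD_comp hD_sub finrank_euclideanSpace_fin hD_pos ((setAverage_eq _ _ _).trans hD_cent)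
end

section
/- Fix γ > 0, unit vectors θ, ξ ∈ S^{n-1} with ⟨θ,ξ⟩ > 0, real numbers r_0 < r_1, a constant m > 0, and an (n−1)-dimensional convex body D ⊂ ξ^⊥ whose centroid (taken within ξ^⊥) is at the origin. Let K_T = conv( r_0 θ , r_1 θ + D ), T(x) = m · 𝟙_{K_T}(x) · ( −⟨x,ξ⟩ + r_1⟨θ,ξ⟩ )^{1/γ}, and t_* = ( nγ r_1 + (γ+1) r_0 ) / ( (n+1)γ + 1 ) (so that g(T) = t_* θ). Then ∫_{t_*}^∞ T(sθ) ds = ( (γ+1)/( nγ + γ + 1 ) )^{(γ+1)/γ} · ∫_{-∞}^∞ T(sθ) ds. In particular, when r_0 = −( nγ/(γ+1) ) r_1 with r_1 > 0, the function T has centroid at the origin and attains equality in the inequality ∫_0^∞ T(sθ) ds ≥ ((γ+1)/(γn+γ+1))^{(γ+1)/γ} ∫_{-∞}^∞ T(sθ) ds. -/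
open MeasureTheory Set
open scoped RealInnerProductSpace

/-!
Write a point of the ambient space as `y + u • θ` with `y ⟂ ξ`. In these oblique coordinates `T` is
a constant times `(r₁ - u) ^ p`, with `p = 1 / γ`, on the cone with apex `(0, r₀)` and base
`D × {r₁}`. The slice of this cone at height `u` is a dilate of `D`, so it has centroid `0` and its
volume is proportional to `(u - r₀) ^ (n - 1)`. Hence the centroid of `T` is on the axis `ℝ θ`, at
the height `t` that makes `(u - r₀) ^ n * (r₁ - u) ^ (p + 1)` have derivative proportional to
`(t - u) * (u - r₀) ^ (n - 1) * (r₁ - u) ^ p`. On the axis the integral of `T` beyond a height `s`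
is proportional to `(r₁ - s) ^ (p + 1)`, and the constant of the theorem is the `(p + 1)`-th power
of `(r₁ - t) / (r₁ - r₀)`.
-/

theorem integral_sub_rpow {r₁ t p : ℝ} (hp : -1 < p) :
    ∫ s in t..r₁, (r₁ - s) ^ p = (r₁ - t) ^ (p + 1) / (p + 1) := by
  rw [intervalIntegral.integral_comp_sub_left (· ^ p), integral_rpow (.inl hp), sub_self,
    Real.zero_rpow (by linarith), sub_zero]

theorem intervalIntegrable_sub_rpow {p : ℝ} (hp : -1 < p) (r₀ r₁ : ℝ) :
    IntervalIntegrable (fun u ↦ (r₁ - u) ^ p) volume r₀ r₁ := by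
  simpa using
    (intervalIntegral.intervalIntegrable_rpow' hp (a := r₁ - r₀) (b := 0)).comp_sub_left r₁

theorem integral_pow_mul_rpow_mul_id {p t r₀ r₁ : ℝ} {d : ℕ} (hp : -1 < p) (hr : r₀ ≤ r₁)
    (ht : (d + 1 + p + 1) * t = (d + 1) * r₁ + (p + 1) * r₀) :
    ∫ u in r₀..r₁, (u - r₀) ^ d * ((r₁ - u) ^ p * u) =
      t * ∫ u in r₀..r₁, (u - r₀) ^ d * (r₁ - u) ^ p := by
  have hint : IntervalIntegrable (fun u ↦ (u - r₀) ^ d * (r₁ - u) ^ p) volume r₀ r₁ :=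
    (intervalIntegrable_sub_rpow hp r₀ r₁).continuousOn_mul (by fun_prop)
  have hint' : IntervalIntegrable (fun u ↦ (u - r₀) ^ d * ((r₁ - u) ^ p * u)) volume r₀ r₁ := by
    simpa only [mul_assoc] using hint.mul_continuousOn (continuousOn_id' _)
  have hderiv : ∀ u ∈ Ioo r₀ r₁, HasDerivAt (fun u ↦ (u - r₀) ^ (d + 1) * (r₁ - u) ^ (p + 1))
      ((d + 1 + p + 1) *
        (t * ((u - r₀) ^ d * (r₁ - u) ^ p) - (u - r₀) ^ d * ((r₁ - u) ^ p * u))) u := by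
    intro u hu
    have hpos : 0 < r₁ - u := sub_pos.2 hu.2
    have hpow : HasDerivAt (fun u ↦ (u - r₀) ^ (d + 1)) _ u :=
      ((hasDerivAt_id u).sub_const r₀).pow (d + 1)
    have hrpow := ((hasDerivAt_id u).const_sub r₁).rpow_const (p := p + 1) (Or.inl hpos.ne')
    convert! hpow.mul hrpow using 1
    simp only [id_eq, Real.rpow_add_one hpos.ne', add_sub_cancel_right, Nat.cast_add, Nat.cast_one,
      add_tsub_cancel_right, pow_succ]
    linear_combination (u - r₀) ^ d * (r₁ - u) ^ p * ht
  have hcont : ContinuousOn (fun u ↦ (u - r₀) ^ (d + 1) * (r₁ - u) ^ (p + 1)) (Icc r₀ r₁) :=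
    ((continuous_id.sub continuous_const).pow _ |>.mul <|
      (continuous_const.sub continuous_id).rpow_const fun _ ↦ Or.inr (by linarith)).continuousOn
  have hFTC := intervalIntegral.integral_eq_sub_of_hasDerivAt_of_le hr hcont hderiv
    (((hint.const_mul t).sub hint').const_mul _)
  rw [intervalIntegral.integral_const_mul, intervalIntegral.integral_sub (hint.const_mul t) hint',
    intervalIntegral.integral_const_mul, sub_self, sub_self, zero_pow d.succ_ne_zero,
    Real.zero_rpow (by linarith), mul_zero, zero_mul, sub_zero] at hFTC
  have hne : (d + 1 + p + 1 : ℝ) ≠ 0 := by linarith [d.cast_nonneg (α := ℝ)]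
  exact (sub_eq_zero.1 ((mul_eq_zero.1 hFTC).resolve_left hne)).symm

section Cone

open scoped Pointwise

variable {F : Type*} [NormedAddCommGroup F] [NormedSpace ℝ F] {r₀ r₁ : ℝ} {D : Set F}

/-- The cone in `F × ℝ` with apex `(0, r₀)` and base `D × {r₁}`: the set `K_T` in the coordinates of
`obliqueEquiv`. The last coordinate is called the height. -/
def coneOver (r₀ r₁ : ℝ) (D : Set F) : Set (F × ℝ) :=
  convexHull ℝ (insert (0, r₀) (D ×ˢ {r₁}))

theorem mem_coneOver_iff (hr : r₀ < r₁) (hD : Convex ℝ D) (hne : D.Nonempty) {y : F} {u : ℝ} :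
    (y, u) ∈ coneOver r₀ r₁ D ↔ u ∈ Icc r₀ r₁ ∧ y ∈ ((u - r₀) / (r₁ - r₀)) • D := by
  have hr' : 0 < r₁ - r₀ := sub_pos.2 hr
  simp only [coneOver, convexHull_insert (hne.prod (singleton_nonempty r₁)),
    (hD.prod (convex_singleton r₁)).convexHull_eq, convexJoin_singleton_left, mem_iUnion₂,
    segment_eq_image, Prod.exists, mem_prod, mem_singleton_iff, mem_image, Prod.mk.injEq,
    Prod.smul_mk, Prod.mk_add_mk, smul_zero, zero_add, smul_eq_mul, mem_smul_set]
  constructor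
  · rintro ⟨d, _, ⟨hd, rfl⟩, l, hl, rfl, rfl⟩
    refine ⟨⟨by nlinarith [hl.1], by nlinarith [hl.2]⟩, d, hd, ?_⟩
    congr 1
    field_simp
    ring
  · rintro ⟨hu, d, hd, rfl⟩
    refine ⟨d, r₁, ⟨hd, rfl⟩, (u - r₀) / (r₁ - r₀), ⟨?_, ?_⟩, rfl, ?_⟩
    · exact div_nonneg (sub_nonneg.2 hu.1) hr'.le
    · exact (div_le_one hr').2 (by linarith [hu.2])
    · field_simp
      ring

theorem isCompact_coneOver (hr : r₀ < r₁) (hD : Convex ℝ D) (hne : D.Nonempty)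
    (hDc : IsCompact D) : IsCompact (coneOver r₀ r₁ D) := by
  have himage : coneOver r₀ r₁ D =
      (fun q : ℝ × F ↦ (((q.1 - r₀) / (r₁ - r₀)) • q.2, q.1)) '' (Icc r₀ r₁ ×ˢ D) := by
    ext ⟨y, u⟩
    simp only [mem_coneOver_iff hr hD hne, mem_smul_set, mem_image, Prod.exists, mem_prod,
      Prod.mk.injEq]
    grind
  exact himage ▸ (isCompact_Icc.prod hDc).image (by fun_prop)

theorem zero_mk_mem_coneOver_iff (hr : r₀ < r₁) (hD : Convex ℝ D) (h0 : (0 : F) ∈ D) {u : ℝ} :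
    ((0 : F), u) ∈ coneOver r₀ r₁ D ↔ u ∈ Icc r₀ r₁ := by
  simp only [mem_coneOver_iff hr hD ⟨0, h0⟩, and_iff_left_iff_imp]
  exact fun _ ↦ zero_mem_smul_set h0

/-- The model function `T` in the coordinates of `obliqueEquiv`, up to a constant factor: the
function `(y, u) ↦ (r₁ - u) ^ p` on `coneOver r₀ r₁ D`, extended by `0`. -/
noncomputable def coneDensity (p r₀ r₁ : ℝ) (D : Set F) : F × ℝ → ℝ :=
  (coneOver r₀ r₁ D).indicator fun q ↦ (r₁ - q.2) ^ p

theorem coneDensity_zero_mk (hr : r₀ < r₁) (hD : Convex ℝ D) (h0 : (0 : F) ∈ D) (p : ℝ) :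
    (fun u ↦ coneDensity p r₀ r₁ D (0, u)) = (Icc r₀ r₁).indicator fun u ↦ (r₁ - u) ^ p :=
  funext fun _ ↦ indicator_eq_indicator (zero_mk_mem_coneOver_iff hr hD h0) rfl

theorem setIntegral_Ioi_coneDensity_axis (hr : r₀ < r₁) (hD : Convex ℝ D) (h0 : (0 : F) ∈ D)
    {p t : ℝ} (hp : -1 < p) (ht : t ∈ Icc r₀ r₁) :
    ∫ u in Ioi t, coneDensity p r₀ r₁ D (0, u) = (r₁ - t) ^ (p + 1) / (p + 1) := by
  have hIoc : Ioi t ∩ Icc r₀ r₁ = Ioc t r₁ := by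
    ext u
    simp only [mem_inter_iff, mem_Ioi, mem_Icc, mem_Ioc]
    grind
  rw [coneDensity_zero_mk hr hD h0, setIntegral_indicator measurableSet_Icc, hIoc,
    ← intervalIntegral.integral_of_le ht.2, integral_sub_rpow hp]

theorem integral_coneDensity_axis (hr : r₀ < r₁) (hD : Convex ℝ D) (h0 : (0 : F) ∈ D) {p : ℝ}
    (hp : -1 < p) :
    ∫ u, coneDensity p r₀ r₁ D (0, u) = (r₁ - r₀) ^ (p + 1) / (p + 1) := by
  rw [coneDensity_zero_mk hr hD h0, integral_indicator measurableSet_Icc,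
    integral_Icc_eq_integral_Ioc, ← intervalIntegral.integral_of_le hr.le, integral_sub_rpow hp]

theorem setIntegral_Ioi_coneDensity_axis_eq_mul (hr : r₀ < r₁) (hD : Convex ℝ D)
    (h0 : (0 : F) ∈ D) {p t d : ℝ} (hp : -1 < p) (hd : 0 ≤ d)
    (ht : (d + p + 1) * t = d * r₁ + (p + 1) * r₀) :
    ∫ u in Ioi t, coneDensity p r₀ r₁ D (0, u) =
      ((p + 1) / (d + p + 1)) ^ (p + 1) * ∫ u, coneDensity p r₀ r₁ D (0, u) := by
  have hp' : 0 < p + 1 := by linarith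
  have hd' : 0 < d + p + 1 := by linarith
  have hratio : 0 ≤ (p + 1) / (d + p + 1) := by positivity
  have htail : r₁ - t = (p + 1) / (d + p + 1) * (r₁ - r₀) := by
    field_simp
    linear_combination -ht
  have htmem : t ∈ Icc r₀ r₁ := by constructor <;> nlinarith
  rw [setIntegral_Ioi_coneDensity_axis hr hD h0 hp htmem, integral_coneDensity_axis hr hD h0 hp,
    htail, Real.mul_rpow hratio (sub_nonneg.2 hr.le), mul_div_assoc]

variable [MeasurableSpace F] {ν : Measure F}

theorem integrableOn_coneOver [IsFiniteMeasureOnCompacts ν] [SFinite ν] (hr : r₀ < r₁)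
    (hD : Convex ℝ D) (hne : D.Nonempty) (hDc : IsCompact D) {w : ℝ → ℝ}
    (hw : IntervalIntegrable w volume r₀ r₁) :
    IntegrableOn (fun q ↦ w q.2) (coneOver r₀ r₁ D) (ν.prod volume) := by
  set C := coneOver r₀ r₁ D
  have hC : IsCompact C := isCompact_coneOver hr hD hne hDc
  have hfst : IsCompact (Prod.fst '' C) := hC.image continuous_fst
  have : IsFiniteMeasure (ν.restrict (Prod.fst '' C)) := ⟨by simpa using hfst.measure_lt_top⟩
  have hsub : C ⊆ (Prod.fst '' C) ×ˢ Icc r₀ r₁ := fun q hq ↦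
    ⟨mem_image_of_mem _ hq, ((mem_coneOver_iff hr hD hne).1 hq).1⟩
  refine IntegrableOn.mono_set ?_ hsub
  rw [IntegrableOn, ← Measure.prod_restrict]
  exact ((intervalIntegrable_iff_integrableOn_Icc_of_le hr.le).1 hw).integrable.comp_snd _

variable [BorelSpace F]

theorem setIntegral_coneOver [SFinite ν] {V : Type*} [NormedAddCommGroup V] [NormedSpace ℝ V]
    (hr : r₀ < r₁) (hD : Convex ℝ D) (hne : D.Nonempty) (hDc : IsCompact D) {Φ : F × ℝ → V}
    (hΦ : IntegrableOn Φ (coneOver r₀ r₁ D) (ν.prod volume)) :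
    ∫ q in coneOver r₀ r₁ D, Φ q ∂ν.prod volume =
      ∫ u in Ioc r₀ r₁, ∫ y in ((u - r₀) / (r₁ - r₀)) • D, Φ (y, u) ∂ν := by
  have hC : MeasurableSet (coneOver r₀ r₁ D) := (isCompact_coneOver hr hD hne hDc).measurableSet
  have hfibre (u : ℝ) : ∫ y, (coneOver r₀ r₁ D).indicator Φ (y, u) ∂ν =
      (Icc r₀ r₁).indicator (fun u ↦ ∫ y in ((u - r₀) / (r₁ - r₀)) • D, Φ (y, u) ∂ν) u := by
    by_cases hu : u ∈ Icc r₀ r₁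
    · rw [indicator_of_mem hu, ← integral_indicator (hDc.smul _).measurableSet]
      congr with y
      exact indicator_eq_indicator (by simp only [mem_coneOver_iff hr hD hne, hu, true_and]) rfl
    · simp only [indicator, mem_coneOver_iff hr hD hne, hu, false_and, if_false, integral_zero]
  rw [← integral_indicator hC, integral_prod_symm _ (hΦ.integrable_indicator hC),
    ← integral_Icc_eq_integral_Ioc, ← integral_indicator measurableSet_Icc]
  exact integral_congr_ae (.of_forall hfibre)

theorem zero_mem_of_setAverage_eq_zero [CompleteSpace F] [IsFiniteMeasureOnCompacts ν]
    (hD : Convex ℝ D) (hDc : IsCompact D) (hν : ν D ≠ 0) (hcent : ⨍ y in D, y ∂ν = 0) :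
    (0 : F) ∈ D :=
  hcent ▸ hD.set_average_mem hDc.isClosed hν hDc.measure_ne_top
    (ae_restrict_mem hDc.measurableSet) (continuousOn_id.integrableOn_compact hDc)

variable [FiniteDimensional ℝ F]

theorem setIntegral_coneOver_height [ν.IsAddHaarMeasure] (hr : r₀ < r₁) (hD : Convex ℝ D)
    (hne : D.Nonempty) (hDc : IsCompact D) {w : ℝ → ℝ} (hw : IntervalIntegrable w volume r₀ r₁) :
    ∫ q in coneOver r₀ r₁ D, w q.2 ∂ν.prod volume =
      ν.real D / (r₁ - r₀) ^ Module.finrank ℝ F *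
        ∫ u in r₀..r₁, (u - r₀) ^ Module.finrank ℝ F * w u := by
  rw [setIntegral_coneOver hr hD hne hDc (integrableOn_coneOver hr hD hne hDc hw),
    intervalIntegral.integral_of_le hr.le, ← integral_const_mul]
  refine setIntegral_congr_fun measurableSet_Ioc fun u hu ↦ ?_
  have hscale : 0 ≤ (u - r₀) / (r₁ - r₀) :=
    div_nonneg (sub_nonneg.2 hu.1.le) (sub_nonneg.2 hr.le)
  simp only [setIntegral_const, smul_eq_mul, measureReal_def,
    Measure.addHaar_smul_of_nonneg ν hscale, ENNReal.toReal_mul,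
    ENNReal.toReal_ofReal (pow_nonneg hscale _)]
  rw [div_pow]
  ring

theorem setIntegral_smul_set_eq_zero [ν.IsAddHaarMeasure] (hD : ∫ y in D, y ∂ν = 0) {l : ℝ}
    (hl : 0 < l) : ∫ y in l • D, y ∂ν = 0 := by
  have hscale := Measure.setIntegral_comp_smul_of_pos ν (fun y : F ↦ y) D hl
  rw [integral_smul, hD, smul_zero] at hscale
  exact (smul_eq_zero.1 hscale.symm).resolve_left (inv_ne_zero (pow_pos hl _).ne')

theorem setIntegral_coneOver_smul_fst [ν.IsAddHaarMeasure] (hr : r₀ < r₁) (hD : Convex ℝ D)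
    (hne : D.Nonempty) (hDc : IsCompact D) (hcent : ∫ y in D, y ∂ν = 0) {w : ℝ → ℝ}
    (hw : IntervalIntegrable w volume r₀ r₁) :
    ∫ q in coneOver r₀ r₁ D, w q.2 • q.1 ∂ν.prod volume = 0 := by
  have hint : IntegrableOn (fun q : F × ℝ ↦ w q.2 • q.1) (coneOver r₀ r₁ D) (ν.prod volume) :=
    (integrableOn_coneOver hr hD hne hDc hw).smul_continuousOn continuousOn_fst
      (isCompact_coneOver hr hD hne hDc)
  rw [setIntegral_coneOver hr hD hne hDc hint]
  refine setIntegral_eq_zero_of_forall_eq_zero fun u hu ↦ ?_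
  have hscale : ∫ y in ((u - r₀) / (r₁ - r₀)) • D, y ∂ν = 0 :=
    setIntegral_smul_set_eq_zero hcent (div_pos (sub_pos.2 hu.1) (sub_pos.2 hr))
  calc ∫ y in ((u - r₀) / (r₁ - r₀)) • D, w u • y ∂ν
      = w u • ∫ y in ((u - r₀) / (r₁ - r₀)) • D, y ∂ν := integral_smul _ _
    _ = 0 := by rw [hscale, smul_zero]

theorem setIntegral_coneOver_rpow_smul [ν.IsAddHaarMeasure] (hr : r₀ < r₁) (hD : Convex ℝ D)
    (hne : D.Nonempty) (hDc : IsCompact D) (hcent : ∫ y in D, y ∂ν = 0) {p t : ℝ} (hp : -1 < p)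
    (ht : (Module.finrank ℝ F + 1 + p + 1) * t =
      (Module.finrank ℝ F + 1) * r₁ + (p + 1) * r₀) :
    ∫ q in coneOver r₀ r₁ D, (r₁ - q.2) ^ p • q ∂ν.prod volume =
      (∫ q in coneOver r₀ r₁ D, (r₁ - q.2) ^ p ∂ν.prod volume) • (0, t) := by
  have hw := intervalIntegrable_sub_rpow hp r₀ r₁
  have hint : IntegrableOn (fun q : F × ℝ ↦ (r₁ - q.2) ^ p • q) (coneOver r₀ r₁ D)
      (ν.prod volume) :=
    (integrableOn_coneOver hr hD hne hDc hw).smul_continuousOn (continuousOn_id' _)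
      (isCompact_coneOver hr hD hne hDc)
  ext : 1
  · simpa [fst_integral hint] using setIntegral_coneOver_smul_fst hr hD hne hDc hcent hw
  · simp only [snd_integral hint, Prod.smul_snd, smul_eq_mul]
    rw [setIntegral_coneOver_height hr hD hne hDc hw,
      setIntegral_coneOver_height hr hD hne hDc (hw.mul_continuousOn (continuousOn_id' _)),
      integral_pow_mul_rpow_mul_id hp hr.le ht]
    ring

theorem integral_coneDensity_smul [ν.IsAddHaarMeasure] (hr : r₀ < r₁) (hD : Convex ℝ D)
    (hne : D.Nonempty) (hDc : IsCompact D) (hcent : ∫ y in D, y ∂ν = 0) {p t : ℝ} (hp : -1 < p)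
    (ht : (Module.finrank ℝ F + 1 + p + 1) * t =
      (Module.finrank ℝ F + 1) * r₁ + (p + 1) * r₀) :
    ∫ q, coneDensity p r₀ r₁ D q • q ∂ν.prod volume =
      (∫ q, coneDensity p r₀ r₁ D q ∂ν.prod volume) • (0, t) := by
  have hC : MeasurableSet (coneOver r₀ r₁ D) := (isCompact_coneOver hr hD hne hDc).measurableSet
  simp only [coneDensity, ← indicator_smul_left, integral_indicator hC]
  exact setIntegral_coneOver_rpow_smul hr hD hne hDc hcent hp ht

end Cone

section Oblique

variable {E : Type*} [NormedAddCommGroup E] [InnerProductSpace ℝ E] {θ ξ : E}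

theorem inner_coe_orthogonal_singleton (y : (ℝ ∙ ξ)ᗮ) : ⟪(y : E), ξ⟫ = 0 :=
  Submodule.mem_orthogonal_singleton_iff_inner_left.1 y.2

theorem ne_zero_of_inner_ne_zero (h : ⟪θ, ξ⟫ ≠ 0) : ξ ≠ 0 := by
  rintro rfl
  exact h (inner_zero_right θ)

theorem injective_obliqueMap (h : ⟪θ, ξ⟫ ≠ 0) :
    Function.Injective ((ℝ ∙ ξ)ᗮ.subtype.coprod (LinearMap.toSpanSingleton ℝ E θ)) := by
  rw [injective_iff_map_eq_zero]
  rintro ⟨y, u⟩ hq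
  replace hq : (y : E) + u • θ = 0 := hq
  have hu : u = 0 := by
    simpa [inner_add_left, real_inner_smul_left, inner_coe_orthogonal_singleton, h]
      using congrArg (⟪·, ξ⟫) hq
  simpa [hu] using hq

variable [FiniteDimensional ℝ E]

theorem finrank_orthogonal_singleton_add_one (hξ : ξ ≠ 0) :
    Module.finrank ℝ (ℝ ∙ ξ)ᗮ + 1 = Module.finrank ℝ E := by
  rw [← (ℝ ∙ ξ).finrank_add_finrank_orthogonal, finrank_span_singleton hξ, add_comm]

/-- The oblique coordinates `(y, u) ↦ y + u • θ`, in which the axis of the cone `K_T` is the second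
factor and the hyperplanes parallel to `ξ^⊥` are the horizontal slices. -/
noncomputable def obliqueEquiv (h : ⟪θ, ξ⟫ ≠ 0) : ((ℝ ∙ ξ)ᗮ × ℝ) ≃L[ℝ] E :=
  (LinearMap.linearEquivOfInjective _ (injective_obliqueMap h) <| by
    rw [Module.finrank_prod, Module.finrank_self,
      finrank_orthogonal_singleton_add_one (ne_zero_of_inner_ne_zero h)]).toContinuousLinearEquiv

theorem obliqueEquiv_apply (h : ⟪θ, ξ⟫ ≠ 0) (q : (ℝ ∙ ξ)ᗮ × ℝ) :
    obliqueEquiv h q = (q.1 : E) + q.2 • θ := rfl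

theorem inner_obliqueEquiv (h : ⟪θ, ξ⟫ ≠ 0) (q : (ℝ ∙ ξ)ᗮ × ℝ) :
    ⟪obliqueEquiv h q, ξ⟫ = q.2 * ⟪θ, ξ⟫ := by
  rw [obliqueEquiv_apply, inner_add_left, inner_coe_orthogonal_singleton, zero_add,
    real_inner_smul_left]

theorem obliqueEquiv_image_coneOver (h : ⟪θ, ξ⟫ ≠ 0) (r₀ r₁ : ℝ) (D : Set (ℝ ∙ ξ)ᗮ) :
    obliqueEquiv h '' coneOver r₀ r₁ D =
      convexHull ℝ (insert (r₀ • θ) ((fun d ↦ r₁ • θ + d) '' ((↑) '' D))) := by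
  refine ((obliqueEquiv h).toLinearMap.image_convexHull _).trans (congrArg _ ?_)
  simp [image_insert_eq, prod_singleton, image_image, obliqueEquiv_apply, add_comm]

theorem indicator_cone_obliqueEquiv (h : 0 < ⟪θ, ξ⟫) (p : ℝ) {r₀ r₁ : ℝ} (hr : r₀ < r₁)
    {D : Set (ℝ ∙ ξ)ᗮ} (hD : Convex ℝ D) (hne : D.Nonempty) (q : (ℝ ∙ ξ)ᗮ × ℝ) :
    (convexHull ℝ (insert (r₀ • θ) ((fun d ↦ r₁ • θ + d) '' ((↑) '' D)))).indicator
        (fun x ↦ (-⟪x, ξ⟫ + r₁ * ⟪θ, ξ⟫) ^ p) (obliqueEquiv h.ne' q) =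
      ⟪θ, ξ⟫ ^ p * coneDensity p r₀ r₁ D q := by
  rw [← obliqueEquiv_image_coneOver h.ne', coneDensity]
  by_cases hq : q ∈ coneOver r₀ r₁ D
  · have hheight : 0 ≤ r₁ - q.2 := sub_nonneg.2 ((mem_coneOver_iff hr hD hne).1 hq).1.2
    rw [indicator_of_mem (mem_image_of_mem _ hq), indicator_of_mem hq, inner_obliqueEquiv,
      ← Real.mul_rpow h.le hheight]
    ring_nf
  · rw [indicator_of_notMem hq, mul_zero,
      indicator_of_notMem (by rwa [(obliqueEquiv h.ne').injective.mem_set_image])]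

end Oblique

theorem integral_smul_id_of_comp_equiv {G E : Type*} [NormedAddCommGroup G] [NormedSpace ℝ G]
    [FiniteDimensional ℝ G] [MeasurableSpace G] [BorelSpace G] [NormedAddCommGroup E]
    [NormedSpace ℝ E] [FiniteDimensional ℝ E] [MeasurableSpace E] [BorelSpace E]
    (L : G ≃L[ℝ] E) (ν : Measure G) [ν.IsAddHaarMeasure] (μ : Measure E) [μ.IsAddHaarMeasure]
    {f : E → ℝ} {g : G} (hg : ∫ y, f (L y) • y ∂ν = (∫ y, f (L y) ∂ν) • g) :
    ∫ x, f x • x ∂μ = (∫ x, f x ∂μ) • L g := by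
  have hL : MeasurableEmbedding L := L.toHomeomorph.measurableEmbedding
  have : (ν.map L).IsAddHaarMeasure := L.isAddHaarMeasure_map ν
  have hpush : ∫ y, f (L y) • L y ∂ν = L (∫ y, f (L y) • y ∂ν) := by
    simp only [← map_smul]
    exact L.integral_comp_comm _
  rw [Measure.isAddLeftInvariant_eq_smul μ (ν.map L), integral_smul_nnreal_measure,
    integral_smul_nnreal_measure, hL.integral_map, hL.integral_map, hpush, hg, map_smul,
    smul_assoc]


theorem setAverage_image_hausdorffMeasure {F E : Type*} [NormedAddCommGroup F] [NormedSpace ℝ F]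
    [CompleteSpace F] [MeasurableSpace F] [BorelSpace F] [NormedAddCommGroup E] [NormedSpace ℝ E]
    [CompleteSpace E] [MeasurableSpace E] [BorelSpace E] (L : F →ₗᵢ[ℝ] E) {s : ℝ} (hs : 0 ≤ s)
    (D : Set F) : ⨍ x in L '' D, x ∂μH[s] = L (⨍ y in D, y ∂μH[s]) := by
  have hL : MeasurableEmbedding L := L.isometry.isClosedEmbedding.measurableEmbedding
  have hrestrict : μH[s].restrict (L '' D) = (μH[s].restrict D).map L := by
    rw [← Measure.restrict_restrict_of_subset (image_subset_range L D),
      ← L.isometry.map_hausdorffMeasure (.inl hs), hL.restrict_map, L.injective.preimage_image]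
  rw [setAverage_eq, setAverage_eq, measureReal_def,
    L.isometry.hausdorffMeasure_image (.inl hs), hrestrict, hL.integral_map, map_smul,
    ← measureReal_def, L.integral_comp_comm]

section

variable {E : Type*} [NormedAddCommGroup E] [InnerProductSpace ℝ E] [FiniteDimensional ℝ E]
  [MeasurableSpace E] [BorelSpace E] {θ ξ : E}

theorem integral_smul_id_of_comp_obliqueEquiv (h : ⟪θ, ξ⟫ ≠ 0) {μ : Measure E}
    [μ.IsAddHaarMeasure] {ν : Measure (ℝ ∙ ξ)ᗮ} [ν.IsAddHaarMeasure] {T : E → ℝ}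
    {p k r₀ r₁ t : ℝ} (hp : -1 < p) (hr : r₀ < r₁) {D : Set (ℝ ∙ ξ)ᗮ} (hD : Convex ℝ D)
    (hne : D.Nonempty) (hDc : IsCompact D) (hcent : ∫ y in D, y ∂ν = 0)
    (ht : (Module.finrank ℝ E + p + 1) * t = Module.finrank ℝ E * r₁ + (p + 1) * r₀)
    (hT : ∀ q, T (obliqueEquiv h q) = k * coneDensity p r₀ r₁ D q) :
    ∫ x, T x • x ∂μ = (t * ∫ x, T x ∂μ) • θ := by
  rw [← finrank_orthogonal_singleton_add_one (ne_zero_of_inner_ne_zero h)] at ht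
  have hcone := integral_coneDensity_smul hr hD hne hDc hcent hp (mod_cast ht)
  have hpull : ∫ q, T (obliqueEquiv h q) • q ∂ν.prod volume =
      (∫ q, T (obliqueEquiv h q) ∂ν.prod volume) • ((0, t) : (ℝ ∙ ξ)ᗮ × ℝ) := by
    simp only [hT, mul_smul, integral_smul, integral_const_mul, hcone]
  rw [integral_smul_id_of_comp_equiv (obliqueEquiv h) (ν.prod volume) μ hpull,
    obliqueEquiv_apply, Submodule.coe_zero, zero_add, smul_smul, mul_comm]

theorem exists_centered_preimage_orthogonal {D : Set E} (hD : Convex ℝ D) (hDc : IsCompact D)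
    (hsub : D ⊆ {x | ⟪x, ξ⟫ = 0}) (hpos : 0 < μH[Module.finrank ℝ (ℝ ∙ ξ)ᗮ] D)
    (hcent : ⨍ x in D, x ∂μH[Module.finrank ℝ (ℝ ∙ ξ)ᗮ] = 0) :
    ∃ D' : Set (ℝ ∙ ξ)ᗮ, (↑) '' D' = D ∧ Convex ℝ D' ∧ IsCompact D' ∧ 0 ∈ D' ∧
      ∫ y in D', y ∂μH[Module.finrank ℝ (ℝ ∙ ξ)ᗮ] = 0 := by
  let L := (ℝ ∙ ξ)ᗮ.subtypeₗᵢ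
  obtain ⟨D', rfl⟩ : ∃ D', L '' D' = D := subset_range_iff_exists_image_eq.1 fun x hx ↦
    ⟨⟨x, Submodule.mem_orthogonal_singleton_iff_inner_left.2 (hsub hx)⟩, rfl⟩
  rw [L.isometry.hausdorffMeasure_image (.inl (Nat.cast_nonneg _))] at hpos
  rw [setAverage_image_hausdorffMeasure L (Nat.cast_nonneg _),
    map_eq_zero_iff L L.injective] at hcent
  have hD' : Convex ℝ D' := by
    rw [← L.injective.preimage_image D']
    exact hD.linear_preimage L.toLinearMap
  have hDc' : IsCompact D' := L.isometry.isEmbedding.isCompact_iff.2 hDc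
  refine ⟨D', rfl, hD', hDc', zero_mem_of_setAverage_eq_zero hD' hDc' hpos.ne' hcent, ?_⟩
  rw [← measure_smul_setAverage _ hDc'.measure_ne_top, hcent, smul_zero]

theorem model_function_equality_general (hθξ : 0 < ⟪θ, ξ⟫) {n : ℕ}
    (hn : Module.finrank ℝ E = n) {p : ℝ} (hp : -1 < p) {r₀ r₁ : ℝ} (hr : r₀ < r₁) (m : ℝ)
    {D : Set E} (hD_conv : Convex ℝ D) (hD_comp : IsCompact D) (hD_sub : D ⊆ {x | ⟪x, ξ⟫ = 0})
    (hD_pos : 0 < μH[(n : ℝ) - 1] D) (hD_cent : ⨍ x in D, x ∂μH[(n : ℝ) - 1] = 0) {T : E → ℝ}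
    (hT : ∀ x, T x = m * (convexHull ℝ (insert (r₀ • θ) ((fun d ↦ r₁ • θ + d) '' D))).indicator
      (fun y ↦ (-⟪y, ξ⟫ + r₁ * ⟪θ, ξ⟫) ^ p) x)
    {t : ℝ} (ht : t = (n * r₁ + (p + 1) * r₀) / (n + p + 1)) :
    (∫ x, T x • x) = (t * ∫ x, T x) • θ ∧
      (∫ s in Ioi t, T (s • θ)) = ((p + 1) / (n + p + 1)) ^ (p + 1) * ∫ s : ℝ, T (s • θ) := by
  have hdim : (n : ℝ) - 1 = Module.finrank ℝ (ℝ ∙ ξ)ᗮ := by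
    rw [← hn, ← finrank_orthogonal_singleton_add_one (ne_zero_of_inner_ne_zero hθξ.ne'),
      Nat.cast_succ, add_sub_cancel_right]
  have hn_pos : 0 < n + p + 1 := by linarith [n.cast_nonneg (α := ℝ)]
  rw [eq_div_iff hn_pos.ne', mul_comm] at ht
  rw [hdim] at hD_pos hD_cent
  obtain ⟨D, rfl, hD, hDc, h0, hcent⟩ :=
    exists_centered_preimage_orthogonal hD_conv hD_comp hD_sub hD_pos hD_cent
  have hTcone (q) : T (obliqueEquiv hθξ.ne' q) = m * ⟪θ, ξ⟫ ^ p * coneDensity p r₀ r₁ D q := by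
    rw [hT, mul_assoc, indicator_cone_obliqueEquiv hθξ p hr hD ⟨0, h0⟩]
  have hTaxis (s : ℝ) : T (s • θ) = m * ⟪θ, ξ⟫ ^ p * coneDensity p r₀ r₁ D (0, s) := by
    rw [← hTcone, obliqueEquiv_apply, Submodule.coe_zero, zero_add]
  refine ⟨integral_smul_id_of_comp_obliqueEquiv hθξ.ne' hp hr hD ⟨0, h0⟩ hDc hcent (hn ▸ ht)
    hTcone, ?_⟩
  simp only [hTaxis, integral_const_mul]
  rw [setIntegral_Ioi_coneDensity_axis_eq_mul hr hD h0 hp n.cast_nonneg ht]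
  ring

end

/-- **The model γ-affine function attains equality.** For
`T(x) = m 𝟙_{K_T}(x) (-⟨x,ξ⟩ + r₁⟨θ,ξ⟩)^{1/γ}` with
`K_T = conv( r₀θ , r₁θ + D )` and `t⋆ = (nγr₁ + (γ+1)r₀)/((n+1)γ+1)` (so that
`g(T) = t⋆ θ`), we have
`∫_{t⋆}^∞ T(sθ) ds = ((γ+1)/(nγ+γ+1))^{(γ+1)/γ} ∫_{-∞}^∞ T(sθ) ds`. In
particular, when `r₀ = -(nγ/(γ+1)) r₁` with `r₁ > 0`, the function `T` has
centroid at the origin and attains equality in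
`∫_0^∞ T(sθ) ds ≥ ((γ+1)/(γn+γ+1))^{(γ+1)/γ} ∫_{-∞}^∞ T(sθ) ds`. -/
theorem model_function_equality
    (n : ℕ) (hn : 1 ≤ n)
    (γ : ℝ) (hγ : 0 < γ)
    (θ ξ : EuclideanSpace ℝ (Fin n)) (hθ : ‖θ‖ = 1) (hξ : ‖ξ‖ = 1)
    (hθξ : 0 < ⟪θ, ξ⟫)
    (r₀ r₁ : ℝ) (hr : r₀ < r₁)
    (m : ℝ) (hm : 0 < m)
    (D : Set (EuclideanSpace ℝ (Fin n)))
    (hD_conv : Convex ℝ D) (hD_comp : IsCompact D)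
    (hD_sub : D ⊆ {x | ⟪x, ξ⟫ = 0})
    (hD_pos : 0 < μH[(n : ℝ) - 1] D)
    (hD_cent : (μH[(n : ℝ) - 1] D).toReal⁻¹ • (∫ x in D, x ∂μH[(n : ℝ) - 1]) =
      (0 : EuclideanSpace ℝ (Fin n)))
    (KT : Set (EuclideanSpace ℝ (Fin n)))
    (hKT : KT = convexHull ℝ (insert (r₀ • θ) ((fun d => r₁ • θ + d) '' D)))
    (T : EuclideanSpace ℝ (Fin n) → ℝ)
    (hT : ∀ x, T x = m * KT.indicator (fun y => (-⟪y, ξ⟫ + r₁ * ⟪θ, ξ⟫) ^ (1 / γ)) x)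
    (t : ℝ) (ht : t = (n * γ * r₁ + (γ + 1) * r₀) / ((n + 1) * γ + 1)) :
    (∫ s in Ioi t, T (s • θ)) =
        ((γ + 1) / (n * γ + γ + 1)) ^ ((γ + 1) / γ) * (∫ s : ℝ, T (s • θ)) ∧
      (r₀ = -(n * γ / (γ + 1)) * r₁ → 0 < r₁ →
        (∫ x, T x • x) = (0 : EuclideanSpace ℝ (Fin n)) ∧
        (∫ s in Ioi (0 : ℝ), T (s • θ)) =
          ((γ + 1) / (γ * n + γ + 1)) ^ ((γ + 1) / γ) * (∫ s : ℝ, T (s • θ))) := by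
  subst hKT
  rw [← measureReal_def, ← setAverage_eq] at hD_cent
  have hp : -1 < 1 / γ := by linarith [one_div_pos.2 hγ]
  have hratio : (1 / γ + 1) / (n + 1 / γ + 1) = (γ + 1) / (n * γ + γ + 1) := by field_simp; ring_nf
  have hexp : 1 / γ + 1 = (γ + 1) / γ := by field_simp; ring
  have ht' : t = (n * r₁ + (1 / γ + 1) * r₀) / (n + 1 / γ + 1) := by rw [ht]; field_simp; ring
  obtain ⟨hcentroid, htail⟩ := model_function_equality_general hθξ finrank_euclideanSpace_fin hp hr
    m hD_conv hD_comp hD_sub hD_pos hD_cent hT ht'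
  rw [hratio, hexp] at htail
  refine ⟨htail, fun hr₀ _ ↦ ?_⟩
  have ht0 : t = 0 := by rw [ht, hr₀]; field_simp; ring
  rw [ht0] at hcentroid htail
  exact ⟨by rw [hcentroid, zero_mul, zero_smul], by rw [mul_comm γ n]; exact htail⟩
end
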